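/- arXiv:1201.0697 — 3 statements merged into one kernel-verified Lean document; each statement's English description precedes it below -/
import Mathlib

section
/- For every finite subset W of the vertices of the infinite hexagonal grid G∞, the boundary satisfies |ℬ(W)| ≥ √6 · √(|W| − |ℬ(W)|). -/
/-- Adjacency of the infinite hexagonal grid `G∞` in brick-wall coordinates on `ℤ × ℤ`:
`(x,y)` and `(x',y')` are adjacent iff `y' = y` and `|x' - x| = 1`, or
`x' = x` and `|y' - y| = 1` and `x + min y y'` is even. -/
def hexAdj (v w : ℤ × ℤ) : Prop :=
  (v.2 = w.2 ∧ (v.1 - w.1).natAbs = 1) ∨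
  (v.1 = w.1 ∧ (v.2 - w.2).natAbs = 1 ∧ Even (v.1 + min v.2 w.2))

/-- The neighborhood `𝒩(W)`: vertices not in `W` adjacent to some vertex of `W`. -/
def hexNbhd (W : Set (ℤ × ℤ)) : Set (ℤ × ℤ) :=
  {v | v ∉ W ∧ ∃ w ∈ W, hexAdj v w}

/-- The boundary `ℬ(W)`: vertices of `W` adjacent to some vertex not in `W`. -/
def hexBdry (W : Set (ℤ × ℤ)) : Set (ℤ × ℤ) :=
  {v | v ∈ W ∧ ∃ w, w ∉ W ∧ hexAdj v w}

/-- The outgoing edges `ℰ(W)`, encoded as ordered pairs `(v, w)` with `v ∈ W`, `w ∉ W`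
and `v` adjacent to `w`; each edge with exactly one endpoint in `W` corresponds to
exactly one such pair. -/
def hexCutEdges (W : Set (ℤ × ℤ)) : Set ((ℤ × ℤ) × (ℤ × ℤ)) :=
  {p | p.1 ∈ W ∧ p.2 ∉ W ∧ hexAdj p.1 p.2}

/-- The hexagonal cell `C(a,b)`, with vertex set `{(2a+b+i, b+j) : i ∈ {0,1,2}, j ∈ {0,1}}`. -/
def hexCell (a b : ℤ) : Set (ℤ × ℤ) :=
  {(2*a+b, b), (2*a+b+1, b), (2*a+b+2, b),
   (2*a+b, b+1), (2*a+b+1, b+1), (2*a+b+2, b+1)}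

/-- The vertex set `V(G_r)` of the finite hexagonal grid of radius `r`: the union of the
cells `C(a,b)` with `(|a| + |b| + |a+b|)/2 ≤ r - 1`. -/
def gridVerts (r : ℕ) : Set (ℤ × ℤ) :=
  {v | ∃ a b : ℤ, a.natAbs + b.natAbs + (a+b).natAbs ≤ 2*(r-1) ∧ v ∈ hexCell a b}

/-- `𝒩_{G_r}(W)`: vertices of `V(G_r) \ W` adjacent to some vertex of `W`. -/
def hexNbhdIn (r : ℕ) (W : Set (ℤ × ℤ)) : Set (ℤ × ℤ) :=
  {v | v ∈ gridVerts r ∧ v ∉ W ∧ ∃ w ∈ W, hexAdj v w}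

/-- `ℬ_{G_r}(W)`: vertices of `W` adjacent to some vertex of `V(G_r) \ W`. -/
def hexBdryIn (r : ℕ) (W : Set (ℤ × ℤ)) : Set (ℤ × ℤ) :=
  {v | v ∈ W ∧ ∃ w, w ∈ gridVerts r ∧ w ∉ W ∧ hexAdj v w}

/-- `ℰ_{G_r}(W)`: the edges of `G_r` with exactly one endpoint in `W ⊆ V(G_r)`, encoded
as ordered pairs `(v, w)` with `v ∈ W`, `w ∈ V(G_r) \ W`, `v` adjacent to `w`. -/
def hexCutEdgesIn (r : ℕ) (W : Set (ℤ × ℤ)) : Set ((ℤ × ℤ) × (ℤ × ℤ)) :=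
  {p | p.1 ∈ W ∧ p.2 ∈ gridVerts r ∧ p.2 ∉ W ∧ hexAdj p.1 p.2}

/-- The index `ind_i(x,y)` of the direction-`i` row containing `(x,y)`
(directions numbered `0, 1, 2` for the paper's `1, 2, 3`):
`ind_1 = y`, `ind_2 = ⌊(y-x)/2⌋`, `ind_3 = ⌊(x+y)/2⌋`. -/
def rowInd : Fin 3 → ℤ × ℤ → ℤ
  | 0, v => v.2
  | 1, v => Int.fdiv (v.2 - v.1) 2
  | 2, v => Int.fdiv (v.1 + v.2) 2

/-- The linear parameter `p_i` along direction-`i` rows: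
`p_1 = x`, `p_2 = x + y`, `p_3 = x - y`. -/
def rowParam : Fin 3 → ℤ × ℤ → ℤ
  | 0, v => v.1
  | 1, v => v.1 + v.2
  | 2, v => v.1 - v.2

/-- A set of integers is consecutive if it contains every integer between any two of
its elements. -/
def ConsecutiveSet (S : Set ℤ) : Prop :=
  ∀ a ∈ S, ∀ b ∈ S, ∀ k : ℤ, a ≤ k → k ≤ b → k ∈ S

/-- `v` is an outermost neighbor of `W` for direction `i`: the direction-`i` row of `v`
is gray, and the parameter of `v` is `m - 1` or `M + 1`, where `m` and `M` are the
minimum and maximum of the parameter over `W` intersected with that row. -/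
def IsOutermostNeighbor (W : Set (ℤ × ℤ)) (i : Fin 3) (v : ℤ × ℤ) : Prop :=
  (rowParam i v + 1 ∈ rowParam i '' {w ∈ W | rowInd i w = rowInd i v} ∧
    ∀ q ∈ rowParam i '' {w ∈ W | rowInd i w = rowInd i v}, rowParam i v + 1 ≤ q) ∨
  (rowParam i v - 1 ∈ rowParam i '' {w ∈ W | rowInd i w = rowInd i v} ∧
    ∀ q ∈ rowParam i '' {w ∈ W | rowInd i w = rowInd i v}, q ≤ rowParam i v - 1)

namespace HexIsoperimetry

/-- The number of pairs in `B × C` whose sum lies in `A`. -/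
def sumCount (A B C : Finset ℤ) : ℕ :=
  ((B ×ˢ C).filter fun x => x.1 + x.2 ∈ A).card

/-- Removing the least element of `B` and the greatest element of `C` removes a hook of pairs
with pairwise distinct sums. -/
lemma exists_sumCount_le_add (A B C : Finset ℤ) (hB : B.Nonempty) (hC : C.Nonempty) :
    ∃ b ∈ B, ∃ c ∈ C, sumCount A B C ≤ A.card + sumCount A (B.erase b) (C.erase c) := by
  refine ⟨B.min' hB, B.min'_mem hB, C.max' hC, C.max'_mem hC, ?_⟩
  set b := B.min' hB with hb
  set c := C.max' hC with hc
  have hbmin : ∀ x ∈ B, b ≤ x := fun x hx => B.min'_le x hx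
  have hcmax : ∀ x ∈ C, x ≤ c := fun x hx => C.le_max' x hx
  set S := (B ×ˢ C).filter fun x => x.1 + x.2 ∈ A with hS
  have hsplit := Finset.card_filter_add_card_filter_not (s := S) (fun x => x.1 = b ∨ x.2 = c)
  have hook : (S.filter fun x => x.1 = b ∨ x.2 = c).card ≤ A.card := by
    apply Finset.card_le_card_of_injOn (fun x => x.1 + x.2)
    · intro x hx
      simp only [hS, Finset.coe_filter, Finset.mem_filter, Set.mem_ofPred_eq] at hx
      exact hx.1.2
    · rintro ⟨x1, x2⟩ hx ⟨y1, y2⟩ hy hxy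
      simp only [hS, Finset.coe_filter, Finset.mem_filter, Finset.mem_product,
        Set.mem_ofPred_eq] at hx hy hxy
      have h1 := hbmin _ hx.1.1.1
      have h2 := hbmin _ hy.1.1.1
      have h3 := hcmax _ hx.1.1.2
      have h4 := hcmax _ hy.1.1.2
      ext <;> simp only <;> omega
  have rest : (S.filter fun x => ¬(x.1 = b ∨ x.2 = c)).card ≤
      sumCount A (B.erase b) (C.erase c) := by
    apply Finset.card_le_card
    intro x hx
    simp only [hS, Finset.mem_filter, Finset.mem_product, Finset.mem_erase] at hx ⊢
    tauto
  change S.card ≤ _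
  omega

lemma sumCount_le (A : Finset ℤ) (t : ℕ) : ∀ (B C : Finset ℤ) (m n : ℕ),
    B.card = m + t → C.card = n + t → sumCount A B C ≤ A.card * t + m * n := by
  induction t with
  | zero =>
    intro B C m n hB hC
    refine (Finset.card_filter_le _ _).trans ?_
    simp [Finset.card_product, hB, hC]
  | succ t ih =>
    intro B C m n hB hC
    obtain ⟨b, hb, c, hc, h⟩ := exists_sumCount_le_add A B C
      (Finset.card_pos.1 (by omega)) (Finset.card_pos.1 (by omega))
    have := ih (B.erase b) (C.erase c) m n (by rw [Finset.card_erase_of_mem hb]; omega)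
      (by rw [Finset.card_erase_of_mem hc]; omega)
    linarith

lemma sumCount_union_add_inter (A A' B C : Finset ℤ) :
    sumCount (A ∪ A') B C + sumCount (A ∩ A') B C = sumCount A B C + sumCount A' B C := by
  have h := Finset.card_union_add_card_inter
    ((B ×ˢ C).filter fun x => x.1 + x.2 ∈ A) ((B ×ˢ C).filter fun x => x.1 + x.2 ∈ A')
  rw [← Finset.filter_or, ← Finset.filter_and] at h
  simpa [sumCount] using h

lemma card_lt_card_union_image_sub_one (A : Finset ℤ) (hA : A.Nonempty) :
    A.card < (A ∪ A.image (· - 1)).card := by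
  apply Finset.card_lt_card
  refine Finset.ssubset_iff_subset_ne.2 ⟨Finset.subset_union_left, fun h => ?_⟩
  have h1 : A.min' hA - 1 ∈ A :=
    h.symm.subset (Finset.mem_union_right _ (Finset.mem_image_of_mem _ (A.min'_mem hA)))
  have := A.min'_le _ h1
  omega

/-- A set of triangles of the triangular lattice meeting `|A|`, `|B|`, `|C|` strips in the three
directions has at most `(|A| + |B| + |C|)² / 6` elements. -/
lemma six_mul_sumCount_add_sumCount_le (A B C : Finset ℤ) (hA : A.Nonempty) :
    6 * (sumCount A B C + sumCount (A.image (· - 1)) B C) ≤ (A.card + B.card + C.card) ^ 2 := by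
  have hcard : (A.image (· - 1)).card = A.card :=
    Finset.card_image_of_injective _ (sub_left_injective)
  have hlt := card_lt_card_union_image_sub_one A hA
  have hsum := Finset.card_union_add_card_inter A (A.image (· - 1))
  rw [← sumCount_union_add_inter]
  rw [hcard] at hsum
  generalize A ∪ A.image (· - 1) = U at *
  generalize A ∩ A.image (· - 1) = N at *
  generalize A.card = p at *
  by_cases h1 : B.card + C.card < p
  · have hU := sumCount_le U 0 B C B.card C.card rfl rfl
    have hN := sumCount_le N 0 B C B.card C.card rfl rfl
    nlinarith [two_mul_le_add_sq B.card C.card]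
  by_cases h2 : p + B.card < C.card
  · obtain ⟨n, hn⟩ : ∃ n, C.card = n + B.card := ⟨C.card - B.card, by omega⟩
    have hU := sumCount_le U B.card B C 0 n (by simp) hn
    have hN := sumCount_le N B.card B C 0 n (by simp) hn
    nlinarith [two_mul_le_add_sq B.card p]
  by_cases h3 : p + C.card < B.card
  · obtain ⟨n, hn⟩ : ∃ n, B.card = n + C.card := ⟨B.card - C.card, by omega⟩
    have hU := sumCount_le U C.card B C n 0 hn (by simp)
    have hN := sumCount_le N C.card B C n 0 hn (by simp)
    nlinarith [two_mul_le_add_sq C.card p]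
  obtain ⟨t, ht | ht⟩ : ∃ t, B.card + C.card = p + 2 * t ∨ B.card + C.card = p + 2 * t + 1 :=
    ⟨(B.card + C.card - p) / 2, by omega⟩
  · obtain ⟨m, hm⟩ : ∃ m, B.card = m + t := ⟨B.card - t, by omega⟩
    obtain ⟨n, hn⟩ : ∃ n, C.card = n + t := ⟨C.card - t, by omega⟩
    have hU := sumCount_le U t B C m n hm hn
    have hN := sumCount_le N t B C m n hm hn
    have hp : p = m + n := by omega
    have htot : sumCount U B C + sumCount N B C ≤ 2 * (m + n) * t + 2 * (m * n) := by
      rw [← hp]; nlinarith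
    rw [hm, hn, hp]
    zify at htot ⊢
    nlinarith [sq_nonneg ((m : ℤ) - n), sq_nonneg ((m : ℤ) + n - 2 * t)]
  · obtain ⟨m, hm⟩ : ∃ m, B.card = m + (t + 1) := ⟨B.card - (t + 1), by omega⟩
    obtain ⟨n, hn⟩ : ∃ n, C.card = n + (t + 1) := ⟨C.card - (t + 1), by omega⟩
    have hU := sumCount_le U t B C (m + 1) (n + 1) (by omega) (by omega)
    have hN := sumCount_le N (t + 1) B C m n hm hn
    have hp : p = m + n + 1 := by omega
    have htot : sumCount U B C + sumCount N B C + 1 ≤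
        2 * p * t + 2 * ((m + 1) * (n + 1)) := by
      nlinarith
    rw [hm, hn]
    subst hp
    zify at htot ⊢
    nlinarith [sq_nonneg ((m : ℤ) - n), sq_nonneg ((m : ℤ) + n - 2 * t)]

/-- Each row meeting `I` contains a vertex just beyond the last vertex of `I` in that row. -/
lemma card_image_le_card_filter_next {V : Type*} [DecidableEq V] (I D : Finset V)
    (ind par : V → ℤ) (nxt prv : V → V) (hind : ∀ v, ind (nxt v) = ind v)
    (hpar : ∀ v, par v < par (nxt v)) (hprv : ∀ v, prv (nxt v) = v)
    (hD : ∀ v ∈ I, nxt v ∉ I → nxt v ∈ D) :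
    (I.image ind).card ≤ (D.filter fun v => prv v ∈ I ∧ nxt v ∉ I).card := by
  refine le_trans (Finset.card_le_card (t := (D.filter fun v => prv v ∈ I ∧ nxt v ∉ I).image ind)
    ?_) Finset.card_image_le
  intro a ha
  obtain ⟨w, hw, rfl⟩ := Finset.mem_image.1 ha
  obtain ⟨v, hv, hmax⟩ := Finset.exists_max_image (I.filter fun u => ind u = ind w) par
    ⟨w, by simp [hw]⟩
  rw [Finset.mem_filter] at hv
  have hbeyond : ∀ u, ind u = ind w → par v < par u → u ∉ I := fun u hu hlt huI =>
    absurd (hmax u (Finset.mem_filter.2 ⟨huI, hu⟩)) (not_le.2 hlt)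
  have h1 : nxt v ∉ I := hbeyond _ ((hind v).trans hv.2) (hpar v)
  have h2 : nxt (nxt v) ∉ I := hbeyond _ (((hind _).trans (hind v)).trans hv.2)
    ((hpar v).trans (hpar _))
  refine Finset.mem_image.2 ⟨nxt v, ?_, (hind v).trans hv.2⟩
  rw [Finset.mem_filter, hprv]
  exact ⟨hD v hv.1 h1, hv.1, h2⟩

lemma two_mul_card_image_le {V : Type*} [DecidableEq V] (I D : Finset V)
    (ind par : V → ℤ) (nxt prv : V → V) (hind : ∀ v, ind (nxt v) = ind v)
    (hpar : ∀ v, par (nxt v) = par v + 1)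
    (hprv : ∀ v, prv (nxt v) = v) (hnxt : ∀ v, nxt (prv v) = v)
    (hD : ∀ v ∈ I, nxt v ∉ I → nxt v ∈ D) (hD' : ∀ v ∈ I, prv v ∉ I → prv v ∈ D) :
    2 * (I.image ind).card ≤ (D.filter fun v => ¬(nxt v ∈ I ↔ prv v ∈ I)).card := by
  have h1 := card_image_le_card_filter_next I D ind par nxt prv hind
    (fun v => by rw [hpar]; omega) hprv hD
  have h2 := card_image_le_card_filter_next I D ind (fun v => -par v) prv nxt
    (fun v => by rw [← hind, hnxt])
    (fun v => by have := hpar (prv v); rw [hnxt] at this; omega) hnxt hD'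
  have hdisj : Disjoint (D.filter fun v => prv v ∈ I ∧ nxt v ∉ I)
      (D.filter fun v => nxt v ∈ I ∧ prv v ∉ I) := by
    rw [Finset.disjoint_filter]
    tauto
  have hsub : (D.filter fun v => prv v ∈ I ∧ nxt v ∉ I) ∪
      (D.filter fun v => nxt v ∈ I ∧ prv v ∉ I) ⊆
      D.filter fun v => ¬(nxt v ∈ I ↔ prv v ∈ I) := by
    intro v
    simp only [Finset.mem_union, Finset.mem_filter]
    tauto
  have h3 := Finset.card_le_card hsub
  rw [Finset.card_union_of_disjoint hdisj] at h3
  omega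

lemma card_add_card_add_card_le_two_mul {V : Type*} [DecidableEq V] (D : Finset V)
    (P Q R : V → Prop) [DecidablePred P] [DecidablePred Q] [DecidablePred R]
    (h : ∀ v, ¬(P v ∧ Q v ∧ R v)) :
    (D.filter P).card + (D.filter Q).card + (D.filter R).card ≤ 2 * D.card := by
  simp only [Finset.card_filter, ← Finset.sum_add_distrib]
  rw [mul_comm, ← smul_eq_mul]
  refine Finset.sum_le_card_nsmul _ _ _ fun v _ => ?_
  have := h v
  split_ifs <;> first | omega | tauto

/-- The successor along the direction-`2` rows, on which `⌊(y - x) / 2⌋` is constant. -/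
def antidiagNext (v : ℤ × ℤ) : ℤ × ℤ :=
  if (v.1 + v.2) % 2 = 0 then (v.1, v.2 + 1) else (v.1 + 1, v.2)

/-- The inverse of `antidiagNext`. -/
def antidiagPrev (v : ℤ × ℤ) : ℤ × ℤ :=
  if (v.1 + v.2) % 2 = 0 then (v.1 - 1, v.2) else (v.1, v.2 - 1)

/-- The successor along the direction-`3` rows, on which `⌊(x + y) / 2⌋` is constant. -/
def diagNext (v : ℤ × ℤ) : ℤ × ℤ :=
  if (v.1 + v.2) % 2 = 0 then (v.1 + 1, v.2) else (v.1, v.2 - 1)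

/-- The inverse of `diagNext`. -/
def diagPrev (v : ℤ × ℤ) : ℤ × ℤ :=
  if (v.1 + v.2) % 2 = 0 then (v.1, v.2 + 1) else (v.1 - 1, v.2)

lemma hexAdj_right (v : ℤ × ℤ) : hexAdj v (v.1 + 1, v.2) :=
  Or.inl ⟨rfl, by simp⟩

lemma hexAdj_left (v : ℤ × ℤ) : hexAdj v (v.1 - 1, v.2) :=
  Or.inl ⟨rfl, by simp⟩

lemma hexAdj_up (v : ℤ × ℤ) (h : (v.1 + v.2) % 2 = 0) : hexAdj v (v.1, v.2 + 1) :=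
  Or.inr ⟨rfl, by simp, by rw [Int.even_iff]; simpa using h⟩

lemma hexAdj_down (v : ℤ × ℤ) (h : ¬(v.1 + v.2) % 2 = 0) : hexAdj v (v.1, v.2 - 1) :=
  Or.inr ⟨rfl, by simp, by
    rw [Int.even_iff, min_eq_right (by simp)]
    simp only
    omega⟩

lemma hexAdj_antidiagNext (v : ℤ × ℤ) : hexAdj v (antidiagNext v) := by
  unfold antidiagNext
  split_ifs with h
  exacts [hexAdj_up v h, hexAdj_right v]

lemma hexAdj_antidiagPrev (v : ℤ × ℤ) : hexAdj v (antidiagPrev v) := by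
  unfold antidiagPrev
  split_ifs with h
  exacts [hexAdj_left v, hexAdj_down v h]

lemma hexAdj_diagNext (v : ℤ × ℤ) : hexAdj v (diagNext v) := by
  unfold diagNext
  split_ifs with h
  exacts [hexAdj_right v, hexAdj_down v h]

lemma hexAdj_diagPrev (v : ℤ × ℤ) : hexAdj v (diagPrev v) := by
  unfold diagPrev
  split_ifs with h
  exacts [hexAdj_up v h, hexAdj_left v]

/-- The number of rows met by `I`, over all three directions, is at most the number of vertices
outside `I` adjacent to `I`. -/
lemma card_rows_le (I D : Finset (ℤ × ℤ)) (hD : ∀ v ∈ I, ∀ w, hexAdj v w → w ∉ I → w ∈ D) :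
    (I.image Prod.snd).card + (I.image fun v => (v.2 - v.1) / 2).card +
      (I.image fun v => (v.1 + v.2) / 2).card ≤ D.card := by
  have h0 := two_mul_card_image_le I D Prod.snd Prod.fst (fun v => (v.1 + 1, v.2))
    (fun v => (v.1 - 1, v.2)) (fun _ => rfl) (fun _ => rfl) (fun v => by simp)
    (fun v => by simp) (fun v hv => hD v hv _ (hexAdj_right v))
    (fun v hv => hD v hv _ (hexAdj_left v))
  have h1 := two_mul_card_image_le I D (fun v => (v.2 - v.1) / 2) (fun v => v.1 + v.2)
    antidiagNext antidiagPrev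
    (fun v => by unfold antidiagNext; split_ifs <;> simp only <;> omega)
    (fun v => by unfold antidiagNext; split_ifs <;> simp only <;> omega)
    (fun v => by
      unfold antidiagNext antidiagPrev
      split_ifs <;> simp only at * <;> ext <;> simp only <;> omega)
    (fun v => by
      unfold antidiagNext antidiagPrev
      split_ifs <;> simp only at * <;> ext <;> simp only <;> omega)
    (fun v hv => hD v hv _ (hexAdj_antidiagNext v))
    (fun v hv => hD v hv _ (hexAdj_antidiagPrev v))
  have h2 := two_mul_card_image_le I D (fun v => (v.1 + v.2) / 2) (fun v => v.1 - v.2)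
    diagNext diagPrev
    (fun v => by unfold diagNext; split_ifs <;> simp only <;> omega)
    (fun v => by unfold diagNext; split_ifs <;> simp only <;> omega)
    (fun v => by
      unfold diagNext diagPrev
      split_ifs <;> simp only at * <;> ext <;> simp only <;> omega)
    (fun v => by
      unfold diagNext diagPrev
      split_ifs <;> simp only at * <;> ext <;> simp only <;> omega)
    (fun v hv => hD v hv _ (hexAdj_diagNext v))
    (fun v hv => hD v hv _ (hexAdj_diagPrev v))
  have h3 := card_add_card_add_card_le_two_mul D
    (fun v => ¬((v.1 + 1, v.2) ∈ I ↔ (v.1 - 1, v.2) ∈ I))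
    (fun v => ¬(antidiagNext v ∈ I ↔ antidiagPrev v ∈ I))
    (fun v => ¬(diagNext v ∈ I ↔ diagPrev v ∈ I))
    (fun v => by
      unfold antidiagNext antidiagPrev diagNext diagPrev
      split_ifs <;> tauto)
  omega

/-- A vertex is determined by its parity and its rows in two of the three directions. -/
lemma card_le_sumCount_add_sumCount (I : Finset (ℤ × ℤ)) :
    I.card ≤
      sumCount (I.image Prod.snd) (I.image fun v => (v.2 - v.1) / 2)
        (I.image fun v => (v.1 + v.2) / 2) +
      sumCount ((I.image Prod.snd).image (· - 1)) (I.image fun v => (v.2 - v.1) / 2)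
        (I.image fun v => (v.1 + v.2) / 2) := by
  rw [← Finset.card_filter_add_card_filter_not (s := I) (fun v => (v.1 + v.2) % 2 = 0)]
  apply add_le_add
  all_goals
    apply Finset.card_le_card_of_injOn (fun v => ((v.2 - v.1) / 2, (v.1 + v.2) / 2))
    · intro v hv
      simp only [Finset.coe_filter, Set.mem_ofPred_eq, Finset.mem_product] at hv ⊢
      refine ⟨⟨Finset.mem_image_of_mem (fun v : ℤ × ℤ => (v.2 - v.1) / 2) hv.1,
        Finset.mem_image_of_mem (fun v : ℤ × ℤ => (v.1 + v.2) / 2) hv.1⟩, ?_⟩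
      simp only [Finset.mem_image]
      first
        | exact ⟨v, hv.1, by omega⟩
        | exact ⟨v.2, ⟨v, hv.1, rfl⟩, by omega⟩
    · intro v hv w hw hvw
      simp only [Finset.coe_filter, Set.mem_ofPred_eq, Prod.mk.injEq] at hv hw hvw
      ext <;> omega

lemma six_mul_card_le_sq (I D : Finset (ℤ × ℤ))
    (hD : ∀ v ∈ I, ∀ w, hexAdj v w → w ∉ I → w ∈ D) : 6 * I.card ≤ D.card ^ 2 := by
  rcases I.eq_empty_or_nonempty with rfl | hI
  · simp
  · calc 6 * I.card ≤ _ := Nat.mul_le_mul_left 6 (card_le_sumCount_add_sumCount I)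
      _ ≤ _ := six_mul_sumCount_add_sumCount_le _ _ _ (hI.image _)
      _ ≤ _ := Nat.pow_le_pow_left (card_rows_le I D hD) 2

end HexIsoperimetry

/-- For every finite subset `W` of the vertices of the infinite hexagonal grid,
`|ℬ(W)| ≥ √6 · √(|W| - |ℬ(W)|)`. -/
theorem boundary_ge_sqrt (W : Set (ℤ × ℤ)) (hW : W.Finite) :
    Real.sqrt 6 * Real.sqrt ((W.ncard : ℝ) - ((hexBdry W).ncard : ℝ)) ≤
      ((hexBdry W).ncard : ℝ) := by
  classical
  have hsub : hexBdry W ⊆ W := fun v hv => hv.1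
  have hBfin : (hexBdry W).Finite := hW.subset hsub
  have hIfin : (W \ hexBdry W).Finite := hW.subset Set.sdiff_subset
  have key := HexIsoperimetry.six_mul_card_le_sq hIfin.toFinset hBfin.toFinset (by
    intro v hv w hvw hw
    simp only [Set.Finite.mem_toFinset, Set.mem_sdiff, not_and, not_not] at hv hw ⊢
    exact hw (by_contra fun hwW => hv.2 ⟨hv.1, w, hwW, hvw⟩))
  rw [← Set.ncard_eq_toFinset_card _ hIfin, ← Set.ncard_eq_toFinset_card _ hBfin] at key
  have hcard := Set.ncard_sdiff_add_ncard_of_subset hsub hW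
  rw [← hcard, ← Real.sqrt_mul (by norm_num)]
  apply Real.sqrt_le_iff.2
  refine ⟨by positivity, ?_⟩
  push_cast
  rw [add_sub_cancel_right]
  exact_mod_cast key
end

section
/- For every integer r ≥ 1 and every subset W ⊆ V(G_r) with |W| ≤ 3r² (i.e. |W| ≤ |V(G_r)|/2), the number of neighbor vertices of W inside the finite hexagonal grid satisfies |𝒩_{G_r}(W)| ≥ 0.6053 · √|W|. -/
/-- Symmetric coordinates of a vertex: the (reoriented) indices of the three rows through it.
Their sum is `1` or `2`, and moving along an edge changes exactly one of them, by `1`. -/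
def hexCoord (v : ℤ × ℤ) : Fin 3 → ℤ :=
  ![v.2, -((v.2 - v.1) / 2), 1 - (v.1 + v.2) / 2]

lemma hexCoord_sum (v : ℤ × ℤ) {i j l : Fin 3} (hij : i ≠ j) (hil : i ≠ l) (hjl : j ≠ l) :
    hexCoord v i + hexCoord v j + hexCoord v l = 1 ∨
      hexCoord v i + hexCoord v j + hexCoord v l = 2 := by
  fin_cases i <;> fin_cases j <;> fin_cases l <;> simp [hexCoord] at * <;> omega

lemma exists_hexCoord_eq {i j l : Fin 3} (hij : i ≠ j) (hil : i ≠ l) (hjl : j ≠ l) {a b d : ℤ}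
    (h : a + b + d = 1 ∨ a + b + d = 2) :
    ∃ v, hexCoord v i = a ∧ hexCoord v j = b ∧ hexCoord v l = d := by
  have key : ∀ α β γ : ℤ, α + β + γ = 1 ∨ α + β + γ = 2 →
      hexCoord (1 + β - γ, α) = ![α, β, γ] := by
    intro α β γ h
    ext m
    fin_cases m <;> simp [hexCoord] <;> omega
  let f : Fin 3 → ℤ := fun m => if m = i then a else if m = j then b else d
  refine ⟨(1 + f 1 - f 2, f 0), ?_⟩
  rw [key _ _ _ (by fin_cases i <;> fin_cases j <;> fin_cases l <;> simp [f] at * <;> omega)]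
  fin_cases i <;> fin_cases j <;> fin_cases l <;> simp [f] at *

lemma hexCoord_ext {v w : ℤ × ℤ} {i j l : Fin 3} (hij : i ≠ j) (hil : i ≠ l) (hjl : j ≠ l)
    (hi : hexCoord v i = hexCoord w i) (hj : hexCoord v j = hexCoord w j)
    (hl : hexCoord v l = hexCoord w l) : v = w := by
  have h : ∀ m, hexCoord v m = hexCoord w m := by
    intro m
    fin_cases i <;> fin_cases j <;> fin_cases l <;> fin_cases m <;> simp at * <;> assumption
  have h0 := h 0
  have h1 := h 1
  have h2 := h 2
  have h3 := hexCoord_sum v (i := 0) (j := 1) (l := 2) (by decide) (by decide) (by decide)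
  ext <;> simp [hexCoord] at * <;> omega

lemma hexAdj_of_hexCoord {v w : ℤ × ℤ} {i j l : Fin 3} (hij : i ≠ j) (hil : i ≠ l) (hjl : j ≠ l)
    (hi : hexCoord v i = hexCoord w i) (hj : hexCoord v j = hexCoord w j)
    (hl : (hexCoord v l - hexCoord w l).natAbs = 1) : hexAdj v w := by
  obtain ⟨x, y⟩ := v
  obtain ⟨x', y'⟩ := w
  fin_cases i <;> fin_cases j <;> fin_cases l <;>
    simp [hexCoord, hexAdj, Int.even_iff] at * <;> omega

lemma mem_gridVerts_iff {r : ℕ} (hr : 1 ≤ r) (v : ℤ × ℤ) :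
    v ∈ gridVerts r ↔ ∀ i, 1 - (r : ℤ) ≤ hexCoord v i ∧ hexCoord v i ≤ r := by
  obtain ⟨x, y⟩ := v
  rw [Fin.forall_fin_succ, Fin.forall_fin_two]
  simp only [gridVerts, hexCell, hexCoord, Set.mem_ofPred_eq, Set.mem_insert_iff,
    Set.mem_singleton_iff, Prod.mk.injEq, Matrix.cons_val]
  constructor
  · rintro ⟨a, b, h, hv⟩
    simp
    omega
  · intro h
    obtain ⟨α, hα⟩ : ∃ α, α = y := ⟨_, rfl⟩
    obtain ⟨β, hβ⟩ : ∃ β, β = -((y - x) / 2) := ⟨_, rfl⟩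
    obtain ⟨γ, hγ⟩ : ∃ γ, γ = 1 - (x + y) / 2 := ⟨_, rfl⟩
    simp at h
    have hcell : ∃ a b : ℤ, (a = β ∨ a + 1 = β) ∧ (b = α ∨ b + 1 = α) ∧
        (-a - b = γ ∨ 1 - a - b = γ) ∧
        a.natAbs + b.natAbs + (a + b).natAbs ≤ 2 * (r - 1) := by
      by_cases hs : α + β + γ = 1
      · by_cases h1 : β ≤ α ∧ γ ≤ α
        · exact ⟨β, α - 1, by omega⟩
        · by_cases h2 : α ≤ β ∧ γ ≤ β
          · exact ⟨β - 1, α, by omega⟩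
          · exact ⟨β, α, by omega⟩
      · by_cases h1 : α ≤ β ∧ α ≤ γ
        · exact ⟨β - 1, α, by omega⟩
        · by_cases h2 : β ≤ α ∧ β ≤ γ
          · exact ⟨β, α - 1, by omega⟩
          · exact ⟨β - 1, α - 1, by omega⟩
    obtain ⟨a, b, h1, h2, h3, h4⟩ := hcell
    have hx : x = 1 + β - γ := by omega
    have hsum : α + β + γ = 1 ∨ α + β + γ = 2 := by omega
    refine ⟨a, b, h4, ?_⟩
    clear h hβ hγ h4
    rcases h1 with rfl | rfl <;> rcases h2 with rfl | rfl <;> rcases h3 with rfl | rfl <;> omega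

lemma gridVerts_finite {r : ℕ} (hr : 1 ≤ r) : (gridVerts r).Finite := by
  refine (Set.finite_Icc ((-2 * r : ℤ), (1 - r : ℤ)) ((2 * r : ℤ), (r : ℤ))).subset ?_
  intro v hv
  rw [mem_gridVerts_iff hr] at hv
  have h0 := hv 0
  have h1 := hv 1
  have h2 := hv 2
  simp [hexCoord] at h0 h1 h2
  simp only [Set.mem_Icc, Prod.le_def]
  omega

lemma exists_third (i j : Fin 3) : ∃ l, i ≠ l ∧ j ≠ l := by
  revert i j
  decide

/-- Along a row, between a vertex of `W` and a vertex outside `W` there is a neighbor of `W`. -/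
lemma exists_neighbor_between {r : ℕ} (hr : 1 ≤ r) {W : Set (ℤ × ℤ)} {i j : Fin 3}
    (hij : i ≠ j) {p q : ℤ × ℤ} (hpV : p ∈ gridVerts r) (hqV : q ∈ gridVerts r)
    (hp : p ∈ W) (hq : q ∉ W) (hpq : hexCoord p j = hexCoord q j) :
    ∃ n ∈ hexNbhdIn r W, hexCoord n j = hexCoord q j ∧
      hexCoord n i ∈ Set.uIcc (hexCoord p i) (hexCoord q i) := by
  obtain ⟨l, hil, hjl⟩ := exists_third i j
  obtain ⟨d, hd⟩ : ∃ d : ℕ, d = (hexCoord p i - hexCoord q i).natAbs +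
      (hexCoord p l - hexCoord q l).natAbs := ⟨_, rfl⟩
  induction d using Nat.strong_induction_on generalizing p with
  | _ d ih =>
    have hps := hexCoord_sum p hij hil hjl
    have hqs := hexCoord_sum q hij hil hjl
    have hne : d ≠ 0 := by
      intro h0
      have : p = q := hexCoord_ext hij hil hjl (by omega) hpq (by omega)
      exact hq (this ▸ hp)
    obtain ⟨u, huj, hui, hul, hadj, hlt⟩ : ∃ u, hexCoord u j = hexCoord p j ∧
        hexCoord u i ∈ Set.uIcc (hexCoord p i) (hexCoord q i) ∧
        hexCoord u l ∈ Set.uIcc (hexCoord p l) (hexCoord q l) ∧ hexAdj u p ∧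
        (hexCoord u i - hexCoord q i).natAbs + (hexCoord u l - hexCoord q l).natAbs < d := by
      simp only [Set.mem_uIcc]
      have hstep : ∃ a c : ℤ, (a + hexCoord p j + c = 1 ∨ a + hexCoord p j + c = 2) ∧
          ((a = hexCoord p i ∧ (c - hexCoord p l).natAbs = 1) ∨
            (c = hexCoord p l ∧ (a - hexCoord p i).natAbs = 1)) ∧
          (hexCoord p i ≤ a ∧ a ≤ hexCoord q i ∨ hexCoord q i ≤ a ∧ a ≤ hexCoord p i) ∧
          (hexCoord p l ≤ c ∧ c ≤ hexCoord q l ∨ hexCoord q l ≤ c ∧ c ≤ hexCoord p l) ∧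
          (a - hexCoord q i).natAbs + (c - hexCoord q l).natAbs < d := by
        by_cases hs : hexCoord p i + hexCoord p j + hexCoord p l = 1
        · by_cases ht : hexCoord p i < hexCoord q i
          · exact ⟨hexCoord p i + 1, hexCoord p l, by omega⟩
          · exact ⟨hexCoord p i, hexCoord p l + 1, by omega⟩
        · by_cases ht : hexCoord q i < hexCoord p i
          · exact ⟨hexCoord p i - 1, hexCoord p l, by omega⟩
          · exact ⟨hexCoord p i, hexCoord p l - 1, by omega⟩
      obtain ⟨a, c, hs, hor, ha, hc, hlt⟩ := hstep
      obtain ⟨u, rfl, huj, rfl⟩ := exists_hexCoord_eq hij hil hjl hs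
      refine ⟨u, huj, ha, hc, ?_, hlt⟩
      rcases hor with ⟨h1, h2⟩ | ⟨h1, h2⟩
      · exact hexAdj_of_hexCoord hij hil hjl h1 huj h2
      · exact hexAdj_of_hexCoord hjl hij.symm hil.symm huj h1 h2
    have huV : u ∈ gridVerts r := by
      rw [mem_gridVerts_iff hr] at hpV hqV ⊢
      simp only [Set.mem_uIcc] at hui hul
      have hi := And.intro (hpV i) (hqV i)
      have hl := And.intro (hpV l) (hqV l)
      have hj := hpV j
      intro m
      have hm : m = i ∨ m = j ∨ m = l := by
        revert hij hil hjl
        clear * -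
        revert i j l m
        decide
      rcases hm with rfl | rfl | rfl <;> omega
    by_cases huW : u ∈ W
    · obtain ⟨n, hn, hnj, hni⟩ := ih _ hlt huV huW (huj.trans hpq) rfl
      exact ⟨n, hn, hnj, Set.uIcc_subset_uIcc_right hui hni⟩
    · exact ⟨u, ⟨huV, huW, p, hp, hadj⟩, huj.trans hpq, hui⟩

/-- Every vertex of the row `a` of direction `i` lies in `W`. -/
def IsFullRow (r : ℕ) (W : Set (ℤ × ℤ)) (i : Fin 3) (a : ℤ) : Prop :=
  a ∈ Set.Icc (1 - (r : ℤ)) r ∧ ∀ v ∈ gridVerts r, hexCoord v i = a → v ∈ W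

/-- No vertex of the row `a` of direction `i` lies in `W`. -/
def IsEmptyRow (r : ℕ) (W : Set (ℤ × ℤ)) (i : Fin 3) (a : ℤ) : Prop :=
  a ∈ Set.Icc (1 - (r : ℤ)) r ∧ ∀ v ∈ gridVerts r, hexCoord v i = a → v ∉ W

lemma exists_neighbor_of_mixed {r : ℕ} (hr : 1 ≤ r) {W : Set (ℤ × ℤ)} (hW : W ⊆ gridVerts r)
    {i : Fin 3} {a : ℤ} (ha : a ∈ Set.Icc (1 - (r : ℤ)) r)
    (hF : ¬ IsFullRow r W i a) (hE : ¬ IsEmptyRow r W i a) :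
    ∃ n ∈ hexNbhdIn r W, hexCoord n i = a := by
  simp only [IsFullRow, IsEmptyRow, ha, true_and, not_forall, not_not] at hF hE
  obtain ⟨q, hqV, hqa, hq⟩ := hF
  obtain ⟨p, -, hpa, hp⟩ := hE
  obtain ⟨k, hk, -⟩ := exists_third i i
  obtain ⟨n, hn, hni, -⟩ :=
    exists_neighbor_between hr hk.symm (hW hp) hqV hp hq (hpa.trans hqa.symm)
  exact ⟨n, hn, hni.trans hqa⟩

lemma exists_crossing {r : ℕ} (hr : 1 ≤ r) {i j : Fin 3} (hij : i ≠ j) {a b : ℤ}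
    (ha : a ∈ Set.Icc (1 - (r : ℤ)) r) (hb : b ∈ Set.Icc (1 - (r : ℤ)) r)
    (h1 : 1 - (r : ℤ) ≤ a + b) (h2 : a + b ≤ r + 1) :
    ∃ v ∈ gridVerts r, hexCoord v i = a ∧ hexCoord v j = b := by
  obtain ⟨l, hil, hjl⟩ := exists_third i j
  obtain ⟨d, hd, hd1, hd2⟩ : ∃ d : ℤ, (a + b + d = 1 ∨ a + b + d = 2) ∧ 1 - (r : ℤ) ≤ d ∧
      d ≤ r := by
    by_cases h : a + b ≤ r
    · exact ⟨1 - a - b, by omega⟩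
    · exact ⟨2 - a - b, by omega⟩
  obtain ⟨v, hvi, hvj, hvl⟩ := exists_hexCoord_eq hij hil hjl hd
  refine ⟨v, (mem_gridVerts_iff hr v).2 fun m => ?_, hvi, hvj⟩
  rw [Set.mem_Icc] at ha hb
  have hm : m = i ∨ m = j ∨ m = l := by
    revert hij hil hjl
    clear * -
    revert i j l m
    decide
  rcases hm with rfl | rfl | rfl <;> omega

/-- A full row and an empty row of different directions lie on the same side. -/
lemma IsFullRow.same_side {r : ℕ} (hr : 1 ≤ r) {W : Set (ℤ × ℤ)} {i j : Fin 3} (hij : i ≠ j)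
    {a b : ℤ} (hF : IsFullRow r W i a) (hE : IsEmptyRow r W j b) :
    (a ≤ 0 ∧ b ≤ 0) ∨ (1 ≤ a ∧ 1 ≤ b) := by
  by_contra hside
  have ha := Set.mem_Icc.1 hF.1
  have hb := Set.mem_Icc.1 hE.1
  obtain ⟨v, hv, hvi, hvj⟩ := exists_crossing hr hij hF.1 hE.1 (by omega) (by omega)
  exact hE.2 v hv hvj (hF.2 v hv hvi)

/-- A set covered by the rows of two directions that meet `N` has at most `2 |N|²` elements. -/
lemma ncard_le_of_rows_meet {S N : Set (ℤ × ℤ)} (hN : N.Finite) {i j : Fin 3} (hij : i ≠ j)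
    (hi : ∀ v ∈ S, ∃ n ∈ N, hexCoord n i = hexCoord v i)
    (hj : ∀ v ∈ S, ∃ n ∈ N, hexCoord n j = hexCoord v j) :
    S.ncard ≤ 2 * N.ncard ^ 2 := by
  obtain ⟨l, hil, hjl⟩ := exists_third i j
  let T : Set (ℤ × ℤ × ℤ) :=
    ((hexCoord · i) '' N) ×ˢ ((hexCoord · j) '' N) ×ˢ ({1, 2} : Set ℤ)
  let f : ℤ × ℤ → ℤ × ℤ × ℤ := fun v =>
    (hexCoord v i, hexCoord v j, hexCoord v i + hexCoord v j + hexCoord v l)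
  have hT : T.Finite := (hN.image _).prod ((hN.image _).prod (by simp))
  have hle : S.ncard ≤ T.ncard := by
    refine Set.ncard_le_ncard_of_injOn f ?_ ?_ hT
    · intro v hv
      exact ⟨hi v hv, hj v hv, hexCoord_sum v hij hil hjl⟩
    · intro v _ w _ h
      simp only [f, Prod.mk.injEq] at h
      exact hexCoord_ext hij hil hjl h.1 h.2.1 (by omega)
  have hi' := Set.ncard_image_le (f := (hexCoord · i)) hN
  have hj' := Set.ncard_image_le (f := (hexCoord · j)) hN
  calc S.ncard ≤ T.ncard := hle
    _ = ((hexCoord · i) '' N).ncard * (((hexCoord · j) '' N).ncard * 2) := by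
      simp only [T, Set.ncard_prod]
      rw [Set.ncard_pair (by norm_num)]
    _ ≤ N.ncard * (N.ncard * 2) := by gcongr
    _ = 2 * N.ncard ^ 2 := by ring

lemma ncard_Icc_le_of_rows_meet {N : Set (ℤ × ℤ)} (hN : N.Finite) (i : Fin 3) {a b : ℤ}
    (h : ∀ k ∈ Set.Icc a b, ∃ n ∈ N, hexCoord n i = k) : (b + 1 - a).toNat ≤ N.ncard := by
  have h1 : (Set.Icc a b).ncard ≤ ((hexCoord · i) '' N).ncard :=
    Set.ncard_le_ncard h (hN.image _)
  have h2 : (Set.Icc a b).ncard = (b + 1 - a).toNat := by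
    rw [← Finset.coe_Icc, Set.ncard_coe_finset, Int.card_Icc]
  exact h2 ▸ h1.trans (Set.ncard_image_le hN)

lemma six_mul_sq_le_ncard_gridVerts {r : ℕ} (hr : 1 ≤ r) : 6 * r ^ 2 ≤ (gridVerts r).ncard := by
  let T : Finset (Fin 3 × ℤ × ℤ × ℤ) :=
    Finset.univ ×ˢ Finset.Icc 1 (r : ℤ) ×ˢ Finset.Icc (1 - (r : ℤ)) 0 ×ˢ Finset.Icc 1 2
  have hT : T.card = 6 * r ^ 2 := by
    simp only [T, Finset.card_product, Int.card_Icc, Finset.card_univ, Fintype.card_fin]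
    simp
    ring
  have hex : ∀ t : Fin 3 × ℤ × ℤ × ℤ, ∃ v : ℤ × ℤ, t ∈ T →
      hexCoord v t.1 = t.2.1 ∧ hexCoord v (t.1 + 1) = t.2.2.1 ∧
      hexCoord v (t.1 + 2) = t.2.2.2 - t.2.1 - t.2.2.1 := by
    rintro ⟨i, a, b, s⟩
    by_cases ht : (i, a, b, s) ∈ T
    · simp only [T, Finset.mem_product, Finset.mem_Icc] at ht
      obtain ⟨v, hv⟩ := exists_hexCoord_eq (i := i) (j := i + 1) (l := i + 2)
        (a := a) (b := b) (d := s - a - b)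
        (by simp) (by simp) (by simp) (by omega)
      exact ⟨v, fun _ => hv⟩
    · exact ⟨0, fun h => absurd h ht⟩
  choose f hf using hex
  rw [← hT, ← Set.ncard_coe_finset]
  refine Set.ncard_le_ncard_of_injOn f ?_ ?_ (gridVerts_finite hr)
  · rintro ⟨i, a, b, s⟩ ht
    obtain ⟨h1, h2, h3⟩ := hf _ ht
    simp only [T, Finset.coe_product, Set.mem_prod, Finset.mem_coe, Finset.mem_Icc] at ht h1 h2 h3
    rw [mem_gridVerts_iff hr]
    intro m
    have hm : m = i ∨ m = i + 1 ∨ m = i + 2 := by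
      clear * -
      revert i m
      decide
    rcases hm with rfl | rfl | rfl <;> omega
  · rintro ⟨i, a, b, s⟩ ht ⟨i', a', b', s'⟩ ht' heq
    obtain ⟨h1, h2, h3⟩ := hf _ ht
    obtain ⟨h1', h2', h3'⟩ := hf _ ht'
    rw [heq] at h1 h2 h3
    simp only [T, Finset.coe_product, Set.mem_prod, Finset.mem_coe, Finset.mem_Icc]
      at ht ht' h1 h2 h3 h1' h2' h3'
    have hi : i' = i ∨ i' = i + 1 ∨ i' + 1 = i := by
      clear * -
      revert i i'
      decide
    rcases hi with rfl | rfl | rfl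
    · simp only [Prod.mk.injEq, true_and]
      omega
    · omega
    · omega

/-- If all full and empty rows of some direction lie on one side, and both kinds occur, then
there are at least `2r` neighbors. Here `[lo, hi]` and `[lo', hi']` are the two sides. -/
lemma two_mul_le_ncard_of_same_side {r : ℕ} (hr : 1 ≤ r) {W : Set (ℤ × ℤ)}
    (hW : W ⊆ gridVerts r) {i : Fin 3} {a b lo hi lo' hi' : ℤ}
    (hside : (lo = 1 - (r : ℤ) ∧ hi = 0 ∧ lo' = 1 ∧ hi' = r) ∨
      (lo = 1 ∧ hi = r ∧ lo' = 1 - (r : ℤ) ∧ hi' = 0))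
    (hF : ∀ c, IsFullRow r W i c → c ∈ Set.Icc lo hi)
    (hE : ∀ c, IsEmptyRow r W i c → c ∈ Set.Icc lo hi)
    (ha : IsFullRow r W i a) (hb : IsEmptyRow r W i b) :
    2 * r ≤ (hexNbhdIn r W).ncard := by
  have hfin : (hexNbhdIn r W).Finite := (gridVerts_finite hr).subset fun v hv => hv.1
  let N₁ := {n ∈ hexNbhdIn r W | hexCoord n i ∈ Set.Icc lo hi}
  let N₂ := {n ∈ hexNbhdIn r W | hexCoord n i ∈ Set.Icc lo' hi'}
  have hfin₁ : N₁.Finite := hfin.subset fun v hv => hv.1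
  have hfin₂ : N₂.Finite := hfin.subset fun v hv => hv.1
  have ha' := Set.mem_Icc.1 (hF a ha)
  have hb' := Set.mem_Icc.1 (hE b hb)
  obtain ⟨j, hij, -⟩ := exists_third i i
  have h₁ : (hi' + 1 - lo').toNat ≤ N₁.ncard := by
    refine ncard_Icc_le_of_rows_meet hfin₁ j fun k hk => ?_
    rw [Set.mem_Icc] at hk
    have hkr : k ∈ Set.Icc (1 - (r : ℤ)) r := by rw [Set.mem_Icc]; omega
    obtain ⟨p, hpV, hpi, hpj⟩ := exists_crossing hr hij ha.1 hkr (by omega) (by omega)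
    obtain ⟨q, hqV, hqi, hqj⟩ := exists_crossing hr hij hb.1 hkr (by omega) (by omega)
    obtain ⟨n, hn, hnj, hni⟩ := exists_neighbor_between hr hij hpV hqV (ha.2 p hpV hpi)
      (hb.2 q hqV hqi) (hpj.trans hqj.symm)
    refine ⟨n, ⟨hn, ?_⟩, hnj.trans hqj⟩
    rw [Set.mem_uIcc] at hni
    rw [Set.mem_Icc]
    omega
  have h₂ : (hi' + 1 - lo').toNat ≤ N₂.ncard := by
    refine ncard_Icc_le_of_rows_meet hfin₂ i fun k hk => ?_
    rw [Set.mem_Icc] at hk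
    have hkr : k ∈ Set.Icc (1 - (r : ℤ)) r := by rw [Set.mem_Icc]; omega
    obtain ⟨n, hn, hni⟩ := exists_neighbor_of_mixed hr hW hkr
      (fun h => by have := Set.mem_Icc.1 (hF k h); omega)
      (fun h => by have := Set.mem_Icc.1 (hE k h); omega)
    exact ⟨n, ⟨hn, by rw [Set.mem_Icc]; omega⟩, hni⟩
  have hdisj : Disjoint N₁ N₂ := by
    rw [Set.disjoint_left]
    rintro n ⟨-, hn₁⟩ ⟨-, hn₂⟩
    rw [Set.mem_Icc] at hn₁ hn₂
    omega
  have hunion := Set.ncard_union_eq hdisj hfin₁ hfin₂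
  have hsub : (N₁ ∪ N₂).ncard ≤ (hexNbhdIn r W).ncard :=
    Set.ncard_le_ncard (Set.union_subset (fun v hv => hv.1) fun v hv => hv.1) hfin
  omega

/-- If every direction has a full or an empty row, at most one direction lacks a full row, and
at most one lacks an empty row, then there are at least `2r` neighbors. -/
lemma two_mul_le_ncard_of_full_of_empty {r : ℕ} (hr : 1 ≤ r) {W : Set (ℤ × ℤ)}
    (hW : W ⊆ gridVerts r)
    (hF : ∀ i j, i ≠ j → (∃ a, IsFullRow r W i a) ∨ ∃ a, IsFullRow r W j a)
    (hE : ∀ i j, i ≠ j → (∃ a, IsEmptyRow r W i a) ∨ ∃ a, IsEmptyRow r W j a)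
    (hFE : ∀ i, (∃ a, IsFullRow r W i a) ∨ ∃ a, IsEmptyRow r W i a) :
    2 * r ≤ (hexNbhdIn r W).ncard := by
  obtain ⟨i, ⟨a, ha⟩, b, hb⟩ :
      ∃ i, (∃ a, IsFullRow r W i a) ∧ ∃ a, IsEmptyRow r W i a := by
    have := hF 0 1 (by decide)
    have := hF 0 2 (by decide)
    have := hF 1 2 (by decide)
    have := hE 0 1 (by decide)
    have := hE 0 2 (by decide)
    have := hE 1 2 (by decide)
    by_contra! hcon
    have := hcon 0
    have := hcon 1
    have := hcon 2
    grind
  obtain ⟨j, hij, -⟩ := exists_third i i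
  obtain ⟨l, hil, hjl⟩ := exists_third i j
  obtain ⟨m, him, c, hc⟩ : ∃ m, i ≠ m ∧ ∃ c, IsEmptyRow r W m c :=
    (hE j l hjl).elim (fun h => ⟨j, hij, h⟩) fun h => ⟨l, hil, h⟩
  obtain ⟨n, hin, d, hd⟩ : ∃ n, i ≠ n ∧ ∃ d, IsFullRow r W n d :=
    (hF j l hjl).elim (fun h => ⟨j, hij, h⟩) fun h => ⟨l, hil, h⟩
  have hFc := fun x (hx : IsFullRow r W i x) => hx.same_side hr him hc
  have hEd := fun x (hx : IsEmptyRow r W i x) => hd.same_side hr hin.symm hx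
  have hFr := fun x (hx : IsFullRow r W i x) => Set.mem_Icc.1 hx.1
  have hEr := fun x (hx : IsEmptyRow r W i x) => Set.mem_Icc.1 hx.1
  by_cases hlow : c ≤ 0 ∧ d ≤ 0
  · refine two_mul_le_ncard_of_same_side hr hW (.inl ⟨rfl, rfl, rfl, rfl⟩) (fun x hx => ?_)
      (fun x hx => ?_) ha hb
    · have := hFc x hx; have := hFr x hx; rw [Set.mem_Icc]; omega
    · have := hEd x hx; have := hEr x hx; rw [Set.mem_Icc]; omega
  by_cases hupp : 1 ≤ c ∧ 1 ≤ d
  · refine two_mul_le_ncard_of_same_side hr hW (.inr ⟨rfl, rfl, rfl, rfl⟩) (fun x hx => ?_)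
      (fun x hx => ?_) ha hb
    · have := hFc x hx; have := hFr x hx; rw [Set.mem_Icc]; omega
    · have := hEd x hx; have := hEr x hx; rw [Set.mem_Icc]; omega
  have hca := hFc a ha
  have hdb := hEd b hb
  have hmn : m = n := by
    by_contra hmn
    have := hd.same_side hr (Ne.symm hmn) hc
    omega
  subst hmn
  obtain ⟨t, hit, hmt⟩ := exists_third i m
  rcases hFE t with ⟨x, hx⟩ | ⟨x, hx⟩
  · have := hx.same_side hr hit.symm hb
    have := hx.same_side hr hmt.symm hc
    omega
  · have := ha.same_side hr hit hx
    have := hd.same_side hr hmt hx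
    omega

lemma ncard_le_two_mul_sq {r : ℕ} (hr : 1 ≤ r) {W : Set (ℤ × ℤ)} (hW : W ⊆ gridVerts r)
    (hcard : W.ncard ≤ 3 * r ^ 2) : W.ncard ≤ 2 * (hexNbhdIn r W).ncard ^ 2 := by
  have hfin : (hexNbhdIn r W).Finite := (gridVerts_finite hr).subset fun v hv => hv.1
  have hrange : ∀ v ∈ gridVerts r, ∀ i, hexCoord v i ∈ Set.Icc (1 - (r : ℤ)) r :=
    fun v hv => (mem_gridVerts_iff hr v).1 hv
  have hlarge : 2 * r ≤ (hexNbhdIn r W).ncard → W.ncard ≤ 2 * (hexNbhdIn r W).ncard ^ 2 := by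
    intro h
    have := Nat.pow_le_pow_left h 2
    nlinarith
  by_cases hF : ∀ i j, i ≠ j → (∃ a, IsFullRow r W i a) ∨ ∃ a, IsFullRow r W j a
  swap
  · push Not at hF
    obtain ⟨i, j, hij, hi, hj⟩ := hF
    exact ncard_le_of_rows_meet hfin hij
      (fun v hv => exists_neighbor_of_mixed hr hW (hrange v (hW hv) i) (hi _)
        fun h => h.2 v (hW hv) rfl hv)
      (fun v hv => exists_neighbor_of_mixed hr hW (hrange v (hW hv) j) (hj _)
        fun h => h.2 v (hW hv) rfl hv)
  by_cases hE : ∀ i j, i ≠ j → (∃ a, IsEmptyRow r W i a) ∨ ∃ a, IsEmptyRow r W j a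
  swap
  · push Not at hE
    obtain ⟨i, j, hij, hi, hj⟩ := hE
    have hcompl : (gridVerts r \ W).ncard ≤ 2 * (hexNbhdIn r W).ncard ^ 2 :=
      ncard_le_of_rows_meet hfin hij
        (fun v hv => exists_neighbor_of_mixed hr hW (hrange v hv.1 i)
          (fun h => hv.2 (h.2 v hv.1 rfl)) (hi _))
        (fun v hv => exists_neighbor_of_mixed hr hW (hrange v hv.1 j)
          (fun h => hv.2 (h.2 v hv.1 rfl)) (hj _))
    have h1 := six_mul_sq_le_ncard_gridVerts hr
    have h2 := Set.ncard_sdiff_add_ncard_of_subset hW (gridVerts_finite hr)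
    omega
  by_cases hFE : ∀ i, (∃ a, IsFullRow r W i a) ∨ ∃ a, IsEmptyRow r W i a
  · exact hlarge (two_mul_le_ncard_of_full_of_empty hr hW hF hE hFE)
  · push Not at hFE
    obtain ⟨i, hi, hi'⟩ := hFE
    have := ncard_Icc_le_of_rows_meet hfin i (a := 1 - (r : ℤ)) (b := r) fun k hk =>
      exists_neighbor_of_mixed hr hW hk (hi k) (hi' k)
    exact hlarge (by omega)

/-- For every `r ≥ 1` and every `W ⊆ V(G_r)` with `|W| ≤ 3r²`,
`|𝒩_{G_r}(W)| ≥ 0.6053 · √|W|`. -/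
theorem finite_hex_neighbor_isoperimetric (r : ℕ) (hr : 1 ≤ r) (W : Set (ℤ × ℤ))
    (hWsub : W ⊆ gridVerts r) (hWfin : W.Finite) (hcard : W.ncard ≤ 3*r^2) :
    (0.6053 : ℝ) * Real.sqrt W.ncard ≤ ((hexNbhdIn r W).ncard : ℝ) := by
  have h : (W.ncard : ℝ) ≤ 2 * ((hexNbhdIn r W).ncard : ℝ) ^ 2 := by
    exact_mod_cast ncard_le_two_mul_sq hr hWsub hcard
  refine le_of_sq_le_sq ?_ (Nat.cast_nonneg _)
  rw [mul_pow, Real.sq_sqrt (Nat.cast_nonneg _)]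
  have h0 : (0 : ℝ) ≤ W.ncard := Nat.cast_nonneg _
  norm_num
  linarith
end

section
/- For every real number c with 0 ≤ c < √6 − √3 there exists a natural number R_c such that for every integer r ≥ R_c and every subset W ⊆ V(G_r) with |W| ≤ 3r² (i.e. |W| ≤ |V(G_r)|/2), one has |𝒩_{G_r}(W)| ≥ c · √|W|. -/
/-- The hexagonal grid of radius `r` in cube coordinates: integer triples with entries in
`[1 - r, r]` and sum `1` or `2`; edges join `u` and `u + eᵢ`. -/
noncomputable def cubeVerts (r : ℕ) : Finset (Fin 3 → ℤ) :=
  (Fintype.piFinset fun _ => Finset.Icc (1 - r : ℤ) r).filter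
    fun u => u 0 + u 1 + u 2 = 1 ∨ u 0 + u 1 + u 2 = 2

/-- Every edge of the cube-coordinate grid leaving `W` has an endpoint in `N`. -/
def Separates (r : ℕ) (N : Finset (Fin 3 → ℤ)) (W : Set (Fin 3 → ℤ)) : Prop :=
  ∀ u ∈ cubeVerts r, ∀ i, u + Pi.single i 1 ∈ cubeVerts r →
    ¬(u ∈ W ↔ u + Pi.single i 1 ∈ W) → u ∈ N ∨ u + Pi.single i 1 ∈ N

open Classical in
/-- The indices of the rows in direction `i` that are contained in `W`. The rows disjoint
from `W` are `fullRows r Wᶜ i`. -/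
noncomputable def fullRows (r : ℕ) (W : Set (Fin 3 → ℤ)) (i : Fin 3) : Finset ℤ :=
  (Finset.Icc (1 - r : ℤ) r).filter fun t => ∀ u ∈ cubeVerts r, u i = t → u ∈ W

lemma mem_cubeVerts {r : ℕ} {i j k : Fin 3} (hij : i ≠ j) (hik : i ≠ k) (hjk : j ≠ k)
    {u : Fin 3 → ℤ} : u ∈ cubeVerts r ↔
      (1 - r ≤ u i ∧ u i ≤ r) ∧ (1 - r ≤ u j ∧ u j ≤ r) ∧ (1 - r ≤ u k ∧ u k ≤ r) ∧
        (u i + u j + u k = 1 ∨ u i + u j + u k = 2) := by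
  simp only [cubeVerts, Finset.mem_filter, Fintype.mem_piFinset, Finset.mem_Icc, Fin.forall_fin_succ]
  fin_cases i <;> fin_cases j <;> fin_cases k <;> simp at hij hik hjk ⊢ <;> omega

lemma mem_fullRows {r : ℕ} {W : Set (Fin 3 → ℤ)} {i : Fin 3} {t : ℤ} :
    t ∈ fullRows r W i ↔
      (1 - r ≤ t ∧ t ≤ r) ∧ ∀ u ∈ cubeVerts r, u i = t → u ∈ W := by
  simp [fullRows]

lemma ext_of_ne {i j k : Fin 3} (hij : i ≠ j) (hik : i ≠ k) (hjk : j ≠ k)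
    {u v : Fin 3 → ℤ} (hi : u i = v i) (hj : u j = v j) (hk : u k = v k) : u = v := by
  funext l
  have : l = i ∨ l = j ∨ l = k := by omega
  rcases this with rfl | rfl | rfl <;> assumption

lemma exists_mem_cubeVerts {r : ℕ} {i j k : Fin 3} (hij : i ≠ j) (hik : i ≠ k) (hjk : j ≠ k)
    {a b c : ℤ} (ha : 1 - r ≤ a ∧ a ≤ r) (hb : 1 - r ≤ b ∧ b ≤ r) (hc : 1 - r ≤ c ∧ c ≤ r)
    (h : a + b + c = 1 ∨ a + b + c = 2) :
    ∃ u ∈ cubeVerts r, u i = a ∧ u j = b ∧ u k = c := by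
  refine ⟨fun l => if l = i then a else if l = j then b else c, ?_, ?_⟩
  · rw [mem_cubeVerts hij hik hjk]
    simp [hij.symm, hik.symm, hjk.symm, ha, hb, hc, h]
  · simp [hij.symm, hik.symm, hjk.symm]

/-- Two rows in different directions meet inside the grid when their indices are compatible. -/
lemma exists_mem_rows {r : ℕ} {i j k : Fin 3} (hij : i ≠ j) (hik : i ≠ k) (hjk : j ≠ k)
    {a b : ℤ} (ha : 1 - r ≤ a ∧ a ≤ r) (hb : 1 - r ≤ b ∧ b ≤ r)
    (h₁ : 1 - r ≤ a + b) (h₂ : a + b ≤ r + 1) :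
    ∃ u ∈ cubeVerts r, u i = a ∧ u j = b := by
  by_cases hs : a + b ≤ r
  · obtain ⟨u, hu, h⟩ := exists_mem_cubeVerts hij hik hjk ha hb
      (c := 1 - a - b) (by omega) (by omega)
    exact ⟨u, hu, h.1, h.2.1⟩
  · obtain ⟨u, hu, h⟩ := exists_mem_cubeVerts hij hik hjk ha hb
      (c := 2 - a - b) (by omega) (by omega)
    exact ⟨u, hu, h.1, h.2.1⟩

lemma Separates.compl {r : ℕ} {N : Finset (Fin 3 → ℤ)} {W : Set (Fin 3 → ℤ)}
    (h : Separates r N W) : Separates r N Wᶜ := by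
  intro u hu i hv hne
  refine h u hu i hv fun hiff => hne ?_
  simp [hiff]

/-- A row segment whose ends lie on different sides of `W` contains a vertex of `N`. -/
lemma Separates.exists_mem_between {r : ℕ} {N : Finset (Fin 3 → ℤ)} {W : Set (Fin 3 → ℤ)}
    (h : Separates r N W) {i j k : Fin 3} (hij : i ≠ j) (hik : i ≠ k) (hjk : j ≠ k)
    {u v : Fin 3 → ℤ} (hu : u ∈ cubeVerts r) (hv : v ∈ cubeVerts r) (huv : u k = v k)
    (hle : u i - u j ≤ v i - v j) (hne : ¬(u ∈ W ↔ v ∈ W)) :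
    ∃ p ∈ N, p k = u k ∧ u i - u j ≤ p i - p j ∧ p i - p j ≤ v i - v j := by
  obtain ⟨d, hd⟩ : ∃ d : ℕ, v i - v j = u i - u j + d :=
    ⟨(v i - v j - (u i - u j)).toNat, by omega⟩
  induction d generalizing u with
  | zero =>
    have hu' := (mem_cubeVerts hij hik hjk).1 hu
    have hv' := (mem_cubeVerts hij hik hjk).1 hv
    exact absurd (by rw [ext_of_ne hij hik hjk (u := u) (v := v) (by omega) (by omega) huv]) hne
  | succ d ih =>
    have hu' := (mem_cubeVerts hij hik hjk).1 hu
    have hv' := (mem_cubeVerts hij hik hjk).1 hv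
    obtain ⟨w, hw, hwi, hwk, hN⟩ : ∃ w ∈ cubeVerts r, w i - w j = u i - u j + 1 ∧ w k = u k ∧
        (¬(u ∈ W ↔ w ∈ W) → u ∈ N ∨ w ∈ N) := by
      rcases hu'.2.2.2 with hs | hs
      · have hw : u + Pi.single i 1 ∈ cubeVerts r := by
          rw [mem_cubeVerts hij hik hjk]
          simp [hij.symm, hik.symm]
          omega
        exact ⟨_, hw, by simp [hij.symm]; omega, by simp [hik.symm], h u hu i hw⟩
      · have hw : u - Pi.single j 1 ∈ cubeVerts r := by
          rw [mem_cubeVerts hij hik hjk]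
          simp [hij, hjk.symm]
          omega
        refine ⟨_, hw, by simp [hij]; omega, by simp [hjk.symm], fun hW => ?_⟩
        have := h _ hw j (by simpa using hu)
        rw [sub_add_cancel] at this
        exact (this fun hiff => hW hiff.symm).symm
    by_cases hW : u ∈ W ↔ w ∈ W
    · obtain ⟨p, hp, hpk, hp₁, hp₂⟩ := ih hw (hwk.trans huv) (by omega)
        (by rwa [← hW]) (by push_cast at hd; omega)
      exact ⟨p, hp, by omega, by omega, hp₂⟩
    · rcases hN hW with hp | hp
      · exact ⟨u, hp, rfl, le_rfl, hle⟩
      · exact ⟨w, hp, hwk, by omega, by omega⟩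

/-- A row that is neither contained in `W` nor disjoint from it contains a vertex of `N`. -/
lemma Separates.mem_image_of_mixed {r : ℕ} {N : Finset (Fin 3 → ℤ)} {W : Set (Fin 3 → ℤ)}
    (h : Separates r N W) {k : Fin 3} {t : ℤ} (ht : 1 - r ≤ t ∧ t ≤ r)
    (hF : t ∉ fullRows r W k) (hE : t ∉ fullRows r Wᶜ k) : t ∈ N.image (· k) := by
  have hdir : ∀ k : Fin 3, ∃ i j : Fin 3, i ≠ j ∧ i ≠ k ∧ j ≠ k := by decide
  obtain ⟨i, j, hij, hik, hjk⟩ := hdir k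
  simp only [mem_fullRows, not_and, not_forall] at hF hE
  obtain ⟨u, hu, huk, huW⟩ := hF ht
  obtain ⟨v, hv, hvk, hvW⟩ := hE ht
  have hvW' : v ∈ W := by simpa using hvW
  rw [Finset.mem_image]
  rcases le_total (u i - u j) (v i - v j) with hle | hle
  · obtain ⟨p, hp, hpk, -⟩ := h.exists_mem_between hij hik hjk hu hv (by omega) hle (by tauto)
    exact ⟨p, hp, by omega⟩
  · obtain ⟨p, hp, hpk, -⟩ := h.exists_mem_between hij hik hjk hv hu (by omega) hle (by tauto)
    exact ⟨p, hp, by omega⟩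

lemma Separates.two_mul_le_card {r : ℕ} {N : Finset (Fin 3 → ℤ)} {W : Set (Fin 3 → ℤ)}
    (h : Separates r N W) (k : Fin 3) :
    2 * r ≤ (fullRows r W k ∪ fullRows r Wᶜ k).card + N.card := by
  have hsub : Finset.Icc (1 - r : ℤ) r ⊆
      (fullRows r W k ∪ fullRows r Wᶜ k) ∪ N.image (· k) := by
    intro t ht
    rw [Finset.mem_Icc] at ht
    by_cases hF : t ∈ fullRows r W k
    · simp [hF]
    by_cases hE : t ∈ fullRows r Wᶜ k
    · simp [hE]
    exact Finset.mem_union_right _ (h.mem_image_of_mixed ht hF hE)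
  have h₁ := Finset.card_le_card hsub
  have h₂ := Finset.card_union_le (fullRows r W k ∪ fullRows r Wᶜ k) (N.image (· k))
  have h₃ := Finset.card_image_le (s := N) (f := (· k))
  rw [Int.card_Icc] at h₁
  omega

/-- A row contained in `W` does not meet a row disjoint from `W`. -/
lemma add_of_mem_fullRows {r : ℕ} {W : Set (Fin 3 → ℤ)} {i j k : Fin 3} (hij : i ≠ j)
    (hik : i ≠ k) (hjk : j ≠ k) {a b : ℤ} (ha : a ∈ fullRows r W i)
    (hb : b ∈ fullRows r Wᶜ j) : r + 2 ≤ a + b ∨ a + b ≤ -r := by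
  rw [mem_fullRows] at ha hb
  by_contra hcon
  obtain ⟨u, hu, hua, hub⟩ := exists_mem_rows hij hik hjk ha.1 hb.1 (by omega) (by omega)
  exact hb.2 u hu hub (ha.2 u hu hua)

lemma card_le_of_forall_le {S : Finset ℤ} {lo hi : ℤ} (h : ∀ t ∈ S, lo ≤ t ∧ t ≤ hi) :
    S.card ≤ (hi + 1 - lo).toNat := by
  rw [← Int.card_Icc]
  exact Finset.card_le_card fun t ht => Finset.mem_Icc.2 (h t ht)

lemma Separates.le_max {r : ℕ} {N : Finset (Fin 3 → ℤ)} {W : Set (Fin 3 → ℤ)}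
    (h : Separates r N W) {i j k : Fin 3} (hij : i ≠ j) (hik : i ≠ k) (hjk : j ≠ k)
    {a b : ℤ} (ha : a ∈ fullRows r W i) (hb : b ∈ fullRows r Wᶜ j) (hab : r + 2 ≤ a + b) :
    2 * r + 1 - (N.card : ℤ) ≤ max a b := by
  have ha' := (mem_fullRows.1 ha).1
  have hb' := (mem_fullRows.1 hb).1
  have hcard := card_le_of_forall_le (S := fullRows r W k ∪ fullRows r Wᶜ k)
    (lo := r + 2 - max a b) (hi := r) (by
      intro t ht
      rcases Finset.mem_union.1 ht with ht | ht
      · have := add_of_mem_fullRows hjk.symm hik.symm hij.symm ht hb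
        have := (mem_fullRows.1 ht).1
        omega
      · have := add_of_mem_fullRows hik hij hjk.symm ha ht
        have := (mem_fullRows.1 ht).1
        omega)
  have := h.two_mul_le_card k
  omega

/-- If along every row `t ≤ 0` in direction `k` one meets a `W`-row, a row avoiding `W` and
again a `W`-row, then each of these rows contains two vertices of `N`. -/
lemma Separates.two_mul_le_of_alternating {r : ℕ} {N : Finset (Fin 3 → ℤ)}
    {W : Set (Fin 3 → ℤ)} (h : Separates r N W) {i j k : Fin 3} (hij : i ≠ j) (hik : i ≠ k)
    (hjk : j ≠ k) {a b e : ℤ} (ha : a ∈ fullRows r W i) (hb : b ∈ fullRows r W j)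
    (he : e ∈ fullRows r Wᶜ i) (hea : e < a) (he₂ : 2 ≤ e) (hb₂ : 2 ≤ b)
    (heb : r + 2 ≤ e + b) : 2 * r ≤ N.card := by
  rw [mem_fullRows] at ha hb he
  have key : ∀ t ∈ Finset.Icc (1 - r : ℤ) 0,
      (∃ p ∈ N, p k = t ∧ p i - p j ≤ 2 * e + t - 2) ∧
      (∃ p ∈ N, p k = t ∧ 2 * e + t - 1 ≤ p i - p j) := by
    intro t ht
    rw [Finset.mem_Icc] at ht
    obtain ⟨u, hu, hui, huk⟩ := exists_mem_rows hik hij hjk.symm ha.1 (b := t)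
      (by omega) (by omega) (by omega)
    obtain ⟨v, hv, hvj, hvk⟩ := exists_mem_rows hjk hij.symm hik.symm hb.1 (b := t)
      (by omega) (by omega) (by omega)
    obtain ⟨x, hx, hxi, hxj, hxk⟩ := exists_mem_cubeVerts hij hik hjk he.1
      (b := 2 - e - t) (c := t) (by omega) (by omega) (by omega)
    obtain ⟨y, hy, hyi, hyj, hyk⟩ := exists_mem_cubeVerts hij hik hjk he.1
      (b := 1 - e - t) (c := t) (by omega) (by omega) (by omega)
    have hu' := (mem_cubeVerts hij hik hjk).1 hu
    have hv' := (mem_cubeVerts hij hik hjk).1 hv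
    have huW := ha.2 u hu hui
    have hvW := hb.2 v hv hvj
    have hxW : x ∉ W := he.2 x hx hxi
    have hyW : y ∉ W := he.2 y hy hyi
    constructor
    · obtain ⟨p, hp, hpk, -, hle⟩ := h.exists_mem_between hij hik hjk hv hx
        (by omega) (by omega) (by tauto)
      exact ⟨p, hp, by omega, by omega⟩
    · obtain ⟨p, hp, hpk, hle, -⟩ := h.exists_mem_between hij hik hjk hy hu
        (by omega) (by omega) (by tauto)
      exact ⟨p, hp, by omega, by omega⟩
  have hlow : (Finset.Icc (1 - r : ℤ) 0) ⊆
      (N.filter fun p => p i - p j ≤ 2 * e + p k - 2).image (· k) := by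
    intro t ht
    obtain ⟨⟨p, hp, hpk, hle⟩, -⟩ := key t ht
    exact Finset.mem_image.2 ⟨p, Finset.mem_filter.2 ⟨hp, by omega⟩, hpk⟩
  have hhigh : (Finset.Icc (1 - r : ℤ) 0) ⊆
      (N.filter fun p => ¬ p i - p j ≤ 2 * e + p k - 2).image (· k) := by
    intro t ht
    obtain ⟨-, p, hp, hpk, hle⟩ := key t ht
    exact Finset.mem_image.2 ⟨p, Finset.mem_filter.2 ⟨hp, by omega⟩, hpk⟩
  have h₁ := (Finset.card_le_card hlow).trans Finset.card_image_le
  have h₂ := (Finset.card_le_card hhigh).trans Finset.card_image_le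
  have h₃ := Finset.card_filter_add_card_filter_not (s := N)
    (fun p => p i - p j ≤ 2 * e + p k - 2)
  rw [Int.card_Icc] at h₁ h₂
  omega

/-- When all `W`-rows in direction `i` are close to the boundary, a row avoiding `W` in
direction `k` leaves no room for a `W`-row in direction `j`. -/
lemma Separates.fullRows_eq_empty {r : ℕ} {N : Finset (Fin 3 → ℤ)} {W : Set (Fin 3 → ℤ)}
    (h : Separates r N W) (hN : 4 * N.card < 5 * r) {i j k : Fin 3} (hij : i ≠ j)
    (hik : i ≠ k) (hjk : j ≠ k) {a x : ℤ} (ha : a ∈ fullRows r W i)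
    (hx : x ∈ fullRows r Wᶜ k)
    (hF : ∀ t ∈ fullRows r W i, 2 * r + 1 - (N.card : ℤ) ≤ t) : fullRows r W j = ∅ := by
  by_contra hne
  obtain ⟨b, hb⟩ := Finset.nonempty_iff_ne_empty.2 hne
  have ha' := (mem_fullRows.1 ha).1
  have hx' := (mem_fullRows.1 hx).1
  have hb' := (mem_fullRows.1 hb).1
  have hK := hF a ha
  have hax := add_of_mem_fullRows hik hij hjk.symm ha hx
  have hbx := add_of_mem_fullRows hjk hij.symm hik.symm hb hx
  obtain ⟨e, he, heK⟩ : ∃ e ∈ fullRows r Wᶜ i, e < 2 * r + 1 - (N.card : ℤ) := by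
    by_contra! hcon
    have hcard := card_le_of_forall_le (S := fullRows r W i ∪ fullRows r Wᶜ i)
      (lo := 2 * r + 1 - (N.card : ℤ)) (hi := r) (by
        intro t ht
        rcases Finset.mem_union.1 ht with ht | ht
        · exact ⟨hF t ht, (mem_fullRows.1 ht).1.2⟩
        · exact ⟨hcon t ht, (mem_fullRows.1 ht).1.2⟩)
    have := h.two_mul_le_card i
    omega
  have he' := (mem_fullRows.1 he).1
  have hbe := add_of_mem_fullRows hij.symm hjk hik hb he
  have := h.two_mul_le_of_alternating hij hik hjk ha hb he (by omega) (by omega) (by omega)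
    (by omega)
  omega

/-- Among the pairs of `B × C`, few have a sum in a prescribed translate of `-A`. -/
lemma card_filter_sub_mem_le (σ : ℤ) (A : Finset ℤ) (m k : ℕ) (B C : Finset ℤ)
    (hB : B.card ≤ m + k) (hC : C.card ≤ m + k) :
    ((B ×ˢ C).filter fun p => σ - p.1 - p.2 ∈ A).card ≤ k * A.card + m ^ 2 := by
  induction k generalizing B C with
  | zero =>
    refine (Finset.card_filter_le _ _).trans ?_
    rw [Finset.card_product]
    nlinarith [Nat.mul_le_mul hB hC]
  | succ k ih =>
    rcases B.eq_empty_or_nonempty with rfl | hBn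
    · simp
    rcases C.eq_empty_or_nonempty with rfl | hCn
    · simp
    set b := B.min' hBn with hb
    set c := C.max' hCn with hc
    have hbB : b ∈ B := B.min'_mem hBn
    have hcC : c ∈ C := C.max'_mem hCn
    have hih := ih (B.erase b) (C.erase c) (by rw [Finset.card_erase_of_mem hbB]; omega)
      (by rw [Finset.card_erase_of_mem hcC]; omega)
    set hook := ((B ×ˢ C).filter fun p => σ - p.1 - p.2 ∈ A).filter
      fun p => p.1 = b ∨ p.2 = c with hhook
    have hook_le : hook.card ≤ A.card := by
      refine Finset.card_le_card_of_injOn (fun p => σ - p.1 - p.2) ?_ ?_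
      · intro p hp
        simp only [hhook, Finset.coe_filter, Finset.mem_filter, Set.mem_ofPred_eq] at hp
        exact hp.1.2
      · intro p hp q hq hpq
        simp only [hhook, Finset.coe_filter, Finset.mem_filter, Finset.mem_product,
          Set.mem_ofPred_eq] at hp hq hpq
        have h₁ := B.min'_le _ hp.1.1.1
        have h₂ := B.min'_le _ hq.1.1.1
        have h₃ := C.le_max' _ hp.1.1.2
        have h₄ := C.le_max' _ hq.1.1.2
        ext <;> omega
    have hsub : ((B ×ˢ C).filter fun p => σ - p.1 - p.2 ∈ A) ⊆
        hook ∪ ((B.erase b ×ˢ C.erase c).filter fun p => σ - p.1 - p.2 ∈ A) := by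
      intro p hp
      simp only [hhook, Finset.mem_union, Finset.mem_filter, Finset.mem_product,
        Finset.mem_erase] at hp ⊢
      tauto
    have := (Finset.card_le_card hsub).trans (Finset.card_union_le _ _)
    nlinarith

lemma Separates.mem_union_image {r : ℕ} {N : Finset (Fin 3 → ℤ)} {W : Set (Fin 3 → ℤ)}
    (h : Separates r N W) {u : Fin 3 → ℤ} (hu : u ∈ cubeVerts r) (huW : u ∈ W) (l : Fin 3) :
    u l ∈ fullRows r W l ∪ N.image (· l) := by
  have hE : u l ∉ fullRows r Wᶜ l := fun hE => (mem_fullRows.1 hE).2 u hu rfl huW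
  have hl : 1 - (r : ℤ) ≤ u l ∧ u l ≤ r := by
    simp only [cubeVerts, Finset.mem_filter, Fintype.mem_piFinset, Finset.mem_Icc] at hu
    exact hu.1 l
  by_cases hF : u l ∈ fullRows r W l
  · exact Finset.mem_union_left _ hF
  · exact Finset.mem_union_right _ (h.mem_image_of_mixed hl hF hE)

lemma card_le_of_forall_mem {r : ℕ} {i j k : Fin 3} (hij : i ≠ j) (hik : i ≠ k) (hjk : j ≠ k)
    {X : Finset (Fin 3 → ℤ)} (hX : X ⊆ cubeVerts r) {A B C : Finset ℤ}
    (hA : ∀ u ∈ X, u i ∈ A) (hB : ∀ u ∈ X, u j ∈ B) (hC : ∀ u ∈ X, u k ∈ C) {m q : ℕ}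
    (hBm : B.card ≤ m + q) (hCm : C.card ≤ m + q) :
    X.card ≤ 2 * (q * A.card + m ^ 2) := by
  have hσ : ∀ σ : ℤ, (X.filter fun u => u i + u j + u k = σ).card ≤ q * A.card + m ^ 2 := by
    intro σ
    refine le_trans ?_ (card_filter_sub_mem_le σ A m q B C hBm hCm)
    refine Finset.card_le_card_of_injOn (fun u => (u j, u k)) ?_ ?_
    · intro u hu
      simp only [Finset.coe_filter, Set.mem_ofPred_eq] at hu
      have hi := hA u hu.1
      rw [show u i = σ - u j - u k by omega] at hi
      exact Finset.mem_coe.2 (Finset.mem_filter.2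
        ⟨Finset.mem_product.2 ⟨hB u hu.1, hC u hu.1⟩, hi⟩)
    · intro u hu v hv huv
      simp only [Finset.coe_filter, Set.mem_ofPred_eq, Prod.mk.injEq] at hu hv huv
      exact ext_of_ne hij hik hjk (by omega) huv.1 huv.2
  have hsub : X ⊆ (X.filter fun u => u i + u j + u k = 1) ∪
      (X.filter fun u => u i + u j + u k = 2) := by
    intro u hu
    have := (mem_cubeVerts hij hik hjk).1 (hX hu)
    rw [Finset.mem_union, Finset.mem_filter, Finset.mem_filter]
    tauto
  have := (Finset.card_le_card hsub).trans (Finset.card_union_le _ _)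
  have := hσ 1
  have := hσ 2
  omega

open Classical in
lemma Separates.card_le_of_fullRows_eq_empty {r : ℕ} {N : Finset (Fin 3 → ℤ)}
    {W : Set (Fin 3 → ℤ)} (h : Separates r N W) {i j k : Fin 3} (hij : i ≠ j) (hik : i ≠ k)
    (hjk : j ≠ k) (hj : fullRows r W j = ∅) (hk : fullRows r W k = ∅) {m q : ℕ}
    (hN : N.card = m + q) :
    ((cubeVerts r).filter (· ∈ W)).card ≤
      2 * (q * ((fullRows r W i).card + N.card) + m ^ 2) := by
  have hmem : ∀ l, ∀ u ∈ (cubeVerts r).filter (· ∈ W),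
      u l ∈ fullRows r W l ∪ N.image (· l) := fun l u hu =>
    h.mem_union_image (Finset.mem_filter.1 hu).1 (Finset.mem_filter.1 hu).2 l
  have hcard : ∀ l, (fullRows r W l ∪ N.image (· l)).card ≤ (fullRows r W l).card + N.card :=
    fun l => (Finset.card_union_le _ _).trans (Nat.add_le_add_left Finset.card_image_le _)
  have hj' := hcard j
  have hk' := hcard k
  rw [hj, Finset.card_empty, zero_add, hN] at hj'
  rw [hk, Finset.card_empty, zero_add, hN] at hk'
  refine (card_le_of_forall_mem hij hik hjk (Finset.filter_subset _ _) (hmem i)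
    (by simpa only [hj] using hmem j) (by simpa only [hk] using hmem k) hj' hk').trans ?_
  have := hcard i
  gcongr

open Classical in
/-- A set without full rows is small. -/
lemma Separates.card_le_of_forall_fullRows_eq_empty {r : ℕ} {N : Finset (Fin 3 → ℤ)}
    {W : Set (Fin 3 → ℤ)} (h : Separates r N W) (hF : ∀ i, fullRows r W i = ∅) :
    2 * ((cubeVerts r).filter (· ∈ W)).card ≤ 3 * N.card ^ 2 + 1 ∧
      ((cubeVerts r).filter (· ∈ W)).card ≤ N.card ^ 3 := by
  constructor
  · obtain ⟨q, hq⟩ := Nat.even_or_odd' N.card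
    have h01 : (0 : Fin 3) ≠ 1 := by decide
    have h02 : (0 : Fin 3) ≠ 2 := by decide
    have h12 : (1 : Fin 3) ≠ 2 := by decide
    have := h.card_le_of_fullRows_eq_empty h01 h02 h12 (hF 1) (hF 2)
      (m := N.card - q) (q := q) (by omega)
    rw [hF 0, Finset.card_empty, zero_add] at this
    rcases hq with hq | hq
    · rw [show N.card - q = q by omega, hq] at this
      rw [hq]
      nlinarith
    · rw [show N.card - q = q + 1 by omega, hq] at this
      rw [hq]
      nlinarith
  · have hsub : (cubeVerts r).filter (· ∈ W) ⊆ Fintype.piFinset fun l => N.image (· l) := by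
      intro u hu
      rw [Finset.mem_filter] at hu
      refine Fintype.mem_piFinset.2 fun l => ?_
      have := h.mem_union_image hu.1 hu.2 l
      rwa [hF l, Finset.empty_union] at this
    refine (Finset.card_le_card hsub).trans ?_
    rw [Fintype.card_piFinset]
    refine (Finset.prod_le_prod' fun l _ => Finset.card_image_le).trans ?_
    simp

open Classical in
lemma Separates.card_le_of_forall_le {r : ℕ} {N : Finset (Fin 3 → ℤ)} {W : Set (Fin 3 → ℤ)}
    (h : Separates r N W) (hN : 4 * N.card < 5 * r) {i j k : Fin 3} (hij : i ≠ j)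
    (hik : i ≠ k) (hjk : j ≠ k) {a b : ℤ} (ha : a ∈ fullRows r W i)
    (hb : b ∈ fullRows r Wᶜ j)
    (hF : ∀ t ∈ fullRows r W i, 2 * r + 1 - (N.card : ℤ) ≤ t) :
    2 * ((cubeVerts r).filter (· ∈ W)).card + r ^ 2 ≤ 4 * N.card ^ 2 + 1 ∧ r ≤ N.card := by
  have hk := h.fullRows_eq_empty hN hik hij hjk.symm ha hb hF
  obtain ⟨c, hc⟩ : (fullRows r Wᶜ k).Nonempty := by
    have := h.two_mul_le_card k
    rw [hk, Finset.empty_union] at this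
    exact Finset.card_pos.1 (by omega)
  have hj := h.fullRows_eq_empty hN hij hik hjk ha hc hF
  have hcard := _root_.card_le_of_forall_le
    fun t ht => ⟨hF t ht, (mem_fullRows.1 ht).1.2⟩
  have hr : r ≤ N.card := by
    have := (mem_fullRows.1 ha).1
    have := hF a ha
    omega
  refine ⟨?_, hr⟩
  obtain ⟨f, hf⟩ := Nat.exists_eq_add_of_le hr
  obtain ⟨q, hq⟩ := Nat.even_or_odd' r
  have hmain := h.card_le_of_fullRows_eq_empty hij hik hjk hj hk
    (m := N.card - q) (q := q) (by omega)
  have hf' : (fullRows r W i).card ≤ f := by omega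
  have hmul := Nat.mul_le_mul_left q hf'
  generalize ((cubeVerts r).filter (· ∈ W)).card = X at hmain ⊢
  rcases hq with hq | hq
  · rw [show N.card - q = q + f by omega] at hmain
    have hn : N.card = 2 * q + f := by omega
    rw [hn] at hmain ⊢
    rw [hq]
    nlinarith
  · rw [show N.card - q = q + 1 + f by omega] at hmain
    have hn : N.card = 2 * q + 1 + f := by omega
    rw [hn] at hmain ⊢
    rw [hq]
    nlinarith

/-- The grid consists of two classes of three rhombi each. -/
lemma six_mul_sq_le_card_cubeVerts (r : ℕ) : 6 * r ^ 2 ≤ (cubeVerts r).card := by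
  calc 6 * r ^ 2 = ((Finset.univ : Finset (Fin 3)) ×ˢ Finset.Icc (1 : ℤ) 2 ×ˢ
        Finset.Icc (1 : ℤ) r ×ˢ Finset.Icc (1 - r : ℤ) 0).card := by
        simp only [Finset.card_product, Finset.card_univ, Fintype.card_fin, Int.card_Icc]
        rw [show ((r : ℤ) + 1 - 1).toNat = r by omega, show ((2 : ℤ) + 1 - 1).toNat = 2 by rfl,
          show ((0 : ℤ) + 1 - (1 - r)).toNat = r by omega]
        ring
    _ ≤ _ := by
        refine Finset.card_le_card_of_injOn (fun p l => if l = p.1 then p.2.2.1 else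
          if l = p.1 + 1 then p.2.2.2 else p.2.1 - p.2.2.1 - p.2.2.2) ?_ ?_
        · rintro ⟨l, σ, a, b⟩ hp
          have hl : ∀ l : Fin 3, l ≠ l + 1 ∧ l ≠ l + 2 ∧ l + 1 ≠ l + 2 := by decide
          obtain ⟨h₁, h₂, h₃⟩ := hl l
          simp only [Finset.coe_product, Set.mem_prod, Finset.mem_coe, Finset.mem_Icc] at hp
          rw [Finset.mem_coe, mem_cubeVerts h₁ h₂ h₃]
          simp only [if_true, h₁.symm, h₂.symm, h₃.symm, if_false]
          omega
        · rintro ⟨l, σ, a, b⟩ hp ⟨l', σ', a', b'⟩ hp' heq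
          simp only [Finset.coe_product, Set.mem_prod, Finset.mem_coe, Finset.mem_Icc] at hp hp'
          have h₀ := congrFun heq 0
          have h₁ := congrFun heq 1
          have h₂ := congrFun heq 2
          fin_cases l <;> fin_cases l' <;> simp at h₀ h₁ h₂ <;> simp <;> omega

open Classical in
lemma Separates.card_le_of_add_le {r : ℕ} {N : Finset (Fin 3 → ℤ)} {W : Set (Fin 3 → ℤ)}
    (h : Separates r N W) (hN : 4 * N.card < 5 * r) (hr : 2 ≤ r)
    (hW : ((cubeVerts r).filter (· ∈ W)).card ≤ 3 * r ^ 2) {i j k : Fin 3} (hij : i ≠ j)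
    (hik : i ≠ k) (hjk : j ≠ k) {a b : ℤ} (ha : a ∈ fullRows r W i)
    (hb : b ∈ fullRows r Wᶜ j) (hab : r + 2 ≤ a + b) :
    2 * ((cubeVerts r).filter (· ∈ W)).card + r ^ 2 ≤ 4 * N.card ^ 2 + 1 ∧ r ≤ N.card := by
  by_cases hF : ∀ t ∈ fullRows r W i, 2 * r + 1 - (N.card : ℤ) ≤ t
  · exact h.card_le_of_forall_le hN hij hik hjk ha hb hF
  push Not at hF
  obtain ⟨a', ha', hlt⟩ := hF
  have hb' := (mem_fullRows.1 hb).1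
  have ha'' := (mem_fullRows.1 ha').1
  have hE : ∀ t ∈ fullRows r Wᶜ j, 2 * r + 1 - (N.card : ℤ) ≤ t := by
    intro t ht
    have ht' := (mem_fullRows.1 ht).1
    have hat := add_of_mem_fullRows hij hik hjk ha ht
    have hab' := add_of_mem_fullRows hij hik hjk ha' hb
    have hat' := add_of_mem_fullRows hij hik hjk ha' ht
    have haa := (mem_fullRows.1 ha).1
    have := h.le_max hij hik hjk ha' ht (by omega)
    omega
  have hcompl := (h.compl.card_le_of_forall_le hN hij.symm hjk hik hb
    (by rwa [compl_compl]) hE).1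
  have hV := six_mul_sq_le_card_cubeVerts r
  have hsum := Finset.card_filter_add_card_filter_not (s := cubeVerts r) (· ∈ W)
  simp only [Set.mem_compl_iff] at hcompl
  nlinarith

lemma one_sub_mem_cubeVerts {r : ℕ} {u : Fin 3 → ℤ} :
    1 - u ∈ cubeVerts r ↔ u ∈ cubeVerts r := by
  rw [mem_cubeVerts (i := 0) (j := 1) (k := 2) (by decide) (by decide) (by decide),
    mem_cubeVerts (i := 0) (j := 1) (k := 2) (by decide) (by decide) (by decide)]
  simp only [Pi.sub_apply, Pi.one_apply]
  omega

lemma Separates.reflect {r : ℕ} {N : Finset (Fin 3 → ℤ)} {W : Set (Fin 3 → ℤ)}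
    (h : Separates r N W) :
    Separates r (N.image fun u => 1 - u) ((fun u => 1 - u) ⁻¹' W) := by
  intro u hu i hv hne
  have h₁ := h (1 - (u + Pi.single i 1)) (one_sub_mem_cubeVerts.2 hv) i
  rw [show (1 - (u + Pi.single i 1) + Pi.single i 1 : Fin 3 → ℤ) = 1 - u by abel] at h₁
  have hmem : ∀ v : Fin 3 → ℤ, v ∈ N.image (fun u => 1 - u) ↔ 1 - v ∈ N := by
    intro v
    rw [Finset.mem_image]
    exact ⟨fun ⟨w, hw, hwv⟩ => by rw [← hwv]; simpa using hw, fun hv => ⟨_, hv, by simp⟩⟩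
  rw [hmem, hmem]
  exact (h₁ (one_sub_mem_cubeVerts.2 hu) fun hiff => hne hiff.symm).symm

lemma one_sub_mem_fullRows_reflect {r : ℕ} {W : Set (Fin 3 → ℤ)} {i : Fin 3} {t : ℤ}
    (ht : t ∈ fullRows r W i) : 1 - t ∈ fullRows r ((fun u => 1 - u) ⁻¹' W) i := by
  rw [mem_fullRows] at ht ⊢
  refine ⟨by omega, fun u hu hut => ht.2 _ (one_sub_mem_cubeVerts.2 hu) ?_⟩
  simp [hut]

open Classical in
lemma card_filter_reflect (r : ℕ) (W : Set (Fin 3 → ℤ)) :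
    ((cubeVerts r).filter (· ∈ (fun u : Fin 3 → ℤ => 1 - u) ⁻¹' W)).card =
      ((cubeVerts r).filter (· ∈ W)).card := by
  refine Finset.card_bij' (fun u _ => 1 - u) (fun u _ => 1 - u) ?_ ?_ ?_ ?_ <;>
    simp [one_sub_mem_cubeVerts]

open Classical in
lemma Separates.card_le_of_mem_fullRows {r : ℕ} {N : Finset (Fin 3 → ℤ)}
    {W : Set (Fin 3 → ℤ)} (h : Separates r N W) (hN : 4 * N.card < 5 * r) (hr : 2 ≤ r)
    (hW : ((cubeVerts r).filter (· ∈ W)).card ≤ 3 * r ^ 2) {i j k : Fin 3} (hij : i ≠ j)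
    (hik : i ≠ k) (hjk : j ≠ k) {a b : ℤ} (ha : a ∈ fullRows r W i)
    (hb : b ∈ fullRows r Wᶜ j) :
    2 * ((cubeVerts r).filter (· ∈ W)).card + r ^ 2 ≤ 4 * N.card ^ 2 + 1 ∧ r ≤ N.card := by
  rcases add_of_mem_fullRows hij hik hjk ha hb with hab | hab
  · exact h.card_le_of_add_le hN hr hW hij hik hjk ha hb hab
  · have hcard : (N.image fun u => 1 - u).card = N.card :=
      Finset.card_image_of_injective _ fun u v huv => by simpa using huv
    have := h.reflect.card_le_of_add_le (by rwa [hcard]) hr (by rwa [card_filter_reflect])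
      hij hik hjk (one_sub_mem_fullRows_reflect ha)
      (by rw [← Set.preimage_compl]; exact one_sub_mem_fullRows_reflect hb) (by omega)
    rwa [hcard, card_filter_reflect] at this

open Classical in
/-- The isoperimetric inequality in cube coordinates. -/
theorem Separates.fifty_mul_card_le {r : ℕ} {N : Finset (Fin 3 → ℤ)}
    {W : Set (Fin 3 → ℤ)} (h : Separates r N W) (hr : 2 ≤ r)
    (hW : ((cubeVerts r).filter (· ∈ W)).card ≤ 3 * r ^ 2) :
    50 * ((cubeVerts r).filter (· ∈ W)).card ≤ 97 * N.card ^ 2 := by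
  by_cases hN : 4 * N.card < 5 * r
  swap
  · nlinarith
  by_cases hF : ∀ i, fullRows r W i = ∅
  · obtain ⟨h₁, h₂⟩ := h.card_le_of_forall_fullRows_eq_empty hF
    rcases Nat.lt_or_ge N.card 2 with hn | hn
    · interval_cases N.card <;> omega
    · nlinarith
  by_cases hE : ∀ i, fullRows r Wᶜ i = ∅
  · have h₁ := (h.compl.card_le_of_forall_fullRows_eq_empty hE).1
    have hV := six_mul_sq_le_card_cubeVerts r
    have hsum := Finset.card_filter_add_card_filter_not (s := cubeVerts r) (· ∈ W)
    simp only [Set.mem_compl_iff] at h₁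
    nlinarith
  have hpair : ∃ i j, i ≠ j ∧ (fullRows r W i).Nonempty ∧ (fullRows r Wᶜ j).Nonempty := by
    push Not at hF hE
    obtain ⟨i, hi⟩ := hF
    obtain ⟨j, hj⟩ := hE
    by_cases hij : i = j
    · subst hij
      have hcard := h.two_mul_le_card (i + 1)
      have hne : i ≠ i + 1 := by
        have : ∀ i : Fin 3, i ≠ i + 1 := by decide
        exact this i
      have : (fullRows r W (i + 1) ∪ fullRows r Wᶜ (i + 1)).Nonempty :=
        Finset.card_pos.1 (by omega)
      rcases Finset.union_nonempty.1 this with hne' | hne'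
      · exact ⟨i + 1, i, hne.symm, hne', hj⟩
      · exact ⟨i, i + 1, hne, hi, hne'⟩
    · exact ⟨i, j, hij, hi, hj⟩
  obtain ⟨i, j, hij, ⟨a, ha⟩, b, hb⟩ := hpair
  obtain ⟨k, hik, hjk⟩ : ∃ k, i ≠ k ∧ j ≠ k := by
    have : ∀ i j : Fin 3, ∃ k, i ≠ k ∧ j ≠ k := by decide
    exact this i j
  obtain ⟨h₁, h₂⟩ := h.card_le_of_mem_fullRows hN hr hW hij hik hjk ha hb
  nlinarith

/-- The brick-wall coordinates of the vertex with cube coordinates `u`. -/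
def brickPoint (u : Fin 3 → ℤ) : ℤ × ℤ := (u 1 + 1 - u 2, u 0)

lemma mem_cubeVerts_iff {r : ℕ} {u : Fin 3 → ℤ} : u ∈ cubeVerts r ↔
    (1 - r ≤ u 0 ∧ u 0 ≤ r) ∧ (1 - r ≤ u 1 ∧ u 1 ≤ r) ∧ (1 - r ≤ u 2 ∧ u 2 ≤ r) ∧
      (u 0 + u 1 + u 2 = 1 ∨ u 0 + u 1 + u 2 = 2) :=
  mem_cubeVerts (by decide) (by decide) (by decide)

lemma brickPoint_mem_gridVerts {r : ℕ} {u : Fin 3 → ℤ} (hu : u ∈ cubeVerts r) :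
    brickPoint u ∈ gridVerts r := by
  rw [mem_cubeVerts_iff] at hu
  simp only [gridVerts, hexCell, brickPoint, Set.mem_ofPred_eq, Set.mem_insert_iff,
    Set.mem_singleton_iff, Prod.mk.injEq]
  rcases hu.2.2.2 with hs | hs
  · by_cases h₀ : u 1 ≤ u 0 ∧ u 2 ≤ u 0
    · exact ⟨u 1, u 0 - 1, by omega, by omega⟩
    by_cases h₁ : u 0 ≤ u 1 ∧ u 2 ≤ u 1
    · exact ⟨u 1 - 1, u 0, by omega, by omega⟩
    · exact ⟨u 1, u 0, by omega, by omega⟩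
  · by_cases h₀ : u 0 ≤ u 1 ∧ u 0 ≤ u 2
    · exact ⟨u 1 - 1, u 0, by omega, by omega⟩
    by_cases h₁ : u 1 ≤ u 0 ∧ u 1 ≤ u 2
    · exact ⟨u 1, u 0 - 1, by omega, by omega⟩
    · exact ⟨u 1 - 1, u 0 - 1, by omega, by omega⟩

lemma exists_brickPoint_eq {r : ℕ} (hr : 1 ≤ r) {v : ℤ × ℤ} (hv : v ∈ gridVerts r) :
    ∃ u ∈ cubeVerts r, brickPoint u = v := by
  obtain ⟨x, y⟩ := v
  simp only [gridVerts, hexCell, Set.mem_ofPred_eq, Set.mem_insert_iff,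
    Set.mem_singleton_iff, Prod.mk.injEq] at hv
  obtain ⟨a, b, hab, hv⟩ := hv
  refine ⟨![y, (x - y + 1) / 2, 1 - (x + y) / 2], ?_, ?_⟩
  · rw [mem_cubeVerts_iff]
    simp only [Matrix.cons_val]
    omega
  · simp only [brickPoint, Matrix.cons_val, Prod.mk.injEq, and_true]
    omega

lemma brickPoint_bijOn {r : ℕ} (hr : 1 ≤ r) :
    Set.BijOn brickPoint (cubeVerts r) (gridVerts r) := by
  refine ⟨fun u hu => brickPoint_mem_gridVerts hu, fun u hu v hv huv => ?_,
    fun v hv => exists_brickPoint_eq hr hv⟩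
  rw [Finset.mem_coe, mem_cubeVerts_iff] at hu hv
  simp only [brickPoint, Prod.mk.injEq] at huv
  exact ext_of_ne (i := 0) (j := 1) (k := 2) (by decide) (by decide) (by decide)
    (by omega) (by omega) (by omega)

lemma hexAdj_symm {v w : ℤ × ℤ} (h : hexAdj v w) : hexAdj w v := by
  simp only [hexAdj] at h ⊢
  rcases h with ⟨h₁, h₂⟩ | ⟨h₁, h₂, h₃⟩
  · exact Or.inl ⟨h₁.symm, by omega⟩
  · exact Or.inr ⟨h₁.symm, by omega, by rwa [← h₁, min_comm]⟩

lemma hexAdj_brickPoint {r : ℕ} {u : Fin 3 → ℤ} {i : Fin 3} (hu : u ∈ cubeVerts r)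
    (hv : u + Pi.single i 1 ∈ cubeVerts r) :
    hexAdj (brickPoint u) (brickPoint (u + Pi.single i 1)) := by
  rw [mem_cubeVerts_iff] at hu hv
  fin_cases i
  · simp at hv
    refine Or.inr ⟨by simp [brickPoint], by simp [brickPoint], 1 - u 2, ?_⟩
    simp [brickPoint]
    omega
  · left
    simp [brickPoint]
  · left
    simp [brickPoint]

open Classical in
lemma card_filter_brickPoint_mem {r : ℕ} (hr : 1 ≤ r) {S : Set (ℤ × ℤ)}
    (hS : S ⊆ gridVerts r) :
    ((cubeVerts r).filter (· ∈ brickPoint ⁻¹' S)).card = S.ncard := by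
  have himage : brickPoint '' ((cubeVerts r).filter (· ∈ brickPoint ⁻¹' S)) = S := by
    ext v
    simp only [Finset.coe_filter, Set.mem_image, Set.mem_ofPred_eq, Set.mem_preimage]
    refine ⟨fun ⟨u, hu, huv⟩ => huv ▸ hu.2, fun hv => ?_⟩
    obtain ⟨u, hu, rfl⟩ := exists_brickPoint_eq hr (hS hv)
    exact ⟨u, ⟨hu, hv⟩, rfl⟩
  conv_rhs => rw [← himage]
  rw [Set.InjOn.ncard_image ((brickPoint_bijOn hr).injOn.mono
    (Finset.coe_subset.2 (Finset.filter_subset _ _))), Set.ncard_coe_finset]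

open Classical in
lemma separates_brickPoint (r : ℕ) (W : Set (ℤ × ℤ)) :
    Separates r ((cubeVerts r).filter (· ∈ brickPoint ⁻¹' hexNbhdIn r W))
      (brickPoint ⁻¹' W) := by
  intro u hu i hv hne
  have hadj := hexAdj_brickPoint hu hv
  simp only [Finset.mem_filter, Set.mem_preimage, hexNbhdIn, Set.mem_ofPred_eq] at hne ⊢
  by_cases huW : brickPoint u ∈ W
  · have hvW : brickPoint (u + Pi.single i 1) ∉ W := by tauto
    exact Or.inr ⟨hv, brickPoint_mem_gridVerts hv, hvW, _, huW, hexAdj_symm hadj⟩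
  · have hvW : brickPoint (u + Pi.single i 1) ∈ W := by tauto
    exact Or.inl ⟨hu, brickPoint_mem_gridVerts hu, huW, _, hvW, hadj⟩

theorem fifty_mul_ncard_le {r : ℕ} (hr : 2 ≤ r) {W : Set (ℤ × ℤ)} (hW : W ⊆ gridVerts r)
    (hcard : W.ncard ≤ 3 * r ^ 2) : 50 * W.ncard ≤ 97 * (hexNbhdIn r W).ncard ^ 2 := by
  classical
  have hr' : 1 ≤ r := by omega
  have hW' := card_filter_brickPoint_mem hr' hW
  have hN' := card_filter_brickPoint_mem hr' (S := hexNbhdIn r W) fun v hv => hv.1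
  have := (separates_brickPoint r W).fifty_mul_card_le hr (by rwa [hW'])
  rwa [hW', hN'] at this

/-- For every `0 ≤ c < √6 - √3` there is a radius `R_c` beyond which
`|𝒩_{G_r}(W)| ≥ c · √|W|` holds for all `W ⊆ V(G_r)` with `|W| ≤ 3r²`. -/
theorem finite_hex_neighbor_isoperimetric_large_radius (c : ℝ) (hc0 : 0 ≤ c)
    (hc : c < Real.sqrt 6 - Real.sqrt 3) :
    ∃ R : ℕ, ∀ r : ℕ, R ≤ r → ∀ W : Set (ℤ × ℤ), W ⊆ gridVerts r → W.Finite →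
      W.ncard ≤ 3*r^2 → c * Real.sqrt W.ncard ≤ ((hexNbhdIn r W).ncard : ℝ) := by
  have h6 : Real.sqrt 6 ≤ 2.4496 := Real.sqrt_le_iff.2 ⟨by norm_num, by norm_num⟩
  have h3 : 1.732 ≤ Real.sqrt 3 := Real.le_sqrt_of_sq_le (by norm_num)
  have hc2 : c ^ 2 ≤ 50 / 97 := by nlinarith
  refine ⟨2, fun r hr W hW _ hcard => ?_⟩
  have hmain : (50 : ℝ) * W.ncard ≤ 97 * ((hexNbhdIn r W).ncard : ℝ) ^ 2 := by
    exact_mod_cast fifty_mul_ncard_le hr hW hcard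
  refine (pow_le_pow_iff_left₀ (by positivity) (by positivity) two_ne_zero).1 ?_
  rw [mul_pow, Real.sq_sqrt (Nat.cast_nonneg _)]
  have := mul_le_mul_of_nonneg_right hc2 (Nat.cast_nonneg (α := ℝ) W.ncard)
  linarith
end
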